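/- arXiv:2510.12804 — 3 statements merged into one kernel-verified Lean document; each statement's English description precedes it below -/
import Mathlib

section
/- Let p > q and θ ∈ (0, π/2). If h is a positive convex solution of det(∇²h + hσ) = f·h^{p-1}(h² + |∇h|²)^{(n+1-q)/2} in C_θ with ∇_μ h = cot θ · h on ∂C_θ, where f > 0 is smooth on C_θ, then the double normal second derivative on the boundary is bounded: sup_{∂C_θ} |∇²h(μ, μ)| ≤ C, where C depends only on n, p, q, min_{C_θ} f, min_{C_θ} h, ‖f‖_{C²(C_θ)} and ‖h‖_{C⁰(C_θ)}. -/
/- Formalization of statements from "The L_p dual Minkowski problem for capillary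
hypersurfaces".

We work in the ambient space `ℝ^{n+1}`.  The spherical cap `C_θ` is the part of the unit
sphere centred at `cos θ • e` (where `e = -E_{n+1}`) lying in the closed upper half-space.
Functions on `C_θ` are represented by ambient functions `h : Euc n → ℝ`; the intrinsic
(round-metric) gradient `∇h` and Hessian `∇²h` of the restriction of `h` to `C_θ` are
expressed through ambient derivatives (for tangential arguments these expressions depend
only on the restriction of `h` to the cap).  The quantity `det(∇²h + hσ)` is encoded as the
determinant of the endomorphism of `ℝ^{n+1}` acting as `∇²h + hσ` on the tangent space of
the cap and as the identity on the normal line. -/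

open Real Set
open scoped RealInnerProductSpace

noncomputable section

/-- Ambient Euclidean space `ℝ^{n+1}`. -/
abbrev Euc (n : ℕ) : Type := EuclideanSpace ℝ (Fin (n + 1))

/-- The unit vector `e = -E_{n+1}`. -/
def eVec (n : ℕ) : Euc n := -(EuclideanSpace.single (Fin.last n) (1 : ℝ))

/-- `ν(ξ) = ξ - cos θ • e`, the unit normal (at `ξ`) of the sphere containing the cap `C_θ`. -/
def sphNormal (n : ℕ) (θ : ℝ) (ξ : Euc n) : Euc n := ξ - Real.cos θ • eVec n

/-- The spherical cap `C_θ = {ξ ∈ closure ℝ^{n+1}_+ : |ξ - cos θ • e| = 1}`. -/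
def cap (n : ℕ) (θ : ℝ) : Set (Euc n) :=
  {ξ | 0 ≤ ξ (Fin.last n) ∧ ‖sphNormal n θ ξ‖ = 1}

/-- The boundary `∂C_θ`. -/
def capBdry (n : ℕ) (θ : ℝ) : Set (Euc n) :=
  {ξ | ξ (Fin.last n) = 0 ∧ ‖sphNormal n θ ξ‖ = 1}

/-- The outward unit conormal `μ` of `∂C_θ` in `C_θ` (at boundary points). -/
def conormal (n : ℕ) (θ : ℝ) (ξ : Euc n) : Euc n :=
  Real.cot θ • ξ + Real.sin θ • eVec n

/-- Orthogonal projection of `ℝ^{n+1}` onto the tangent space of the cap at `ξ`. -/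
def tproj (n : ℕ) (θ : ℝ) (ξ : Euc n) : Euc n →L[ℝ] Euc n :=
  ContinuousLinearMap.id ℝ (Euc n) - (innerSL ℝ (sphNormal n θ ξ)).smulRight (sphNormal n θ ξ)

/-- `X` is tangent to the cap at `ξ`. -/
def IsTangent (n : ℕ) (θ : ℝ) (ξ X : Euc n) : Prop :=
  ⟪X, sphNormal n θ ξ⟫ = 0

/-- Intrinsic (round-metric) gradient `∇h` of `h` on the cap. -/
def sgrad (n : ℕ) (θ : ℝ) (h : Euc n → ℝ) (ξ : Euc n) : Euc n :=
  tproj n θ ξ (gradient h ξ)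

/-- Intrinsic (round-metric) Hessian `∇²h(X,Y)` of `h` on the cap (tangential arguments). -/
def shess (n : ℕ) (θ : ℝ) (h : Euc n → ℝ) (ξ X Y : Euc n) : ℝ :=
  ⟪(fderiv ℝ (gradient h) ξ) X, Y⟫ - ⟪gradient h ξ, sphNormal n θ ξ⟫ * ⟪X, Y⟫

/-- Endomorphism representing the intrinsic Hessian `∇²h` on tangent vectors
(and vanishing on the normal line). -/
def thessOp (n : ℕ) (θ : ℝ) (h : Euc n → ℝ) (ξ : Euc n) : Euc n →L[ℝ] Euc n :=
  ((tproj n θ ξ).comp ((fderiv ℝ (gradient h) ξ).comp (tproj n θ ξ)))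
    - ⟪gradient h ξ, sphNormal n θ ξ⟫ • tproj n θ ξ

/-- Rank-one projection onto the normal direction at `ξ`. -/
def normalPart (n : ℕ) (θ : ℝ) (ξ : Euc n) : Euc n →L[ℝ] Euc n :=
  (innerSL ℝ (sphNormal n θ ξ)).smulRight (sphNormal n θ ξ)

/-- Endomorphism acting as `∇²h + hσ` on the tangent space and as the identity on the
normal line. -/
def hessOp (n : ℕ) (θ : ℝ) (h : Euc n → ℝ) (ξ : Euc n) : Euc n →L[ℝ] Euc n :=
  thessOp n θ h ξ + h ξ • tproj n θ ξ + normalPart n θ ξ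

/-- `det(∇²h + hσ)` at `ξ`. -/
def sdet (n : ℕ) (θ : ℝ) (h : Euc n → ℝ) (ξ : Euc n) : ℝ :=
  LinearMap.det (hessOp n θ h ξ).toLinearMap

/-- `h > 0` on the cap. -/
def PosOnCap (n : ℕ) (θ : ℝ) (h : Euc n → ℝ) : Prop := ∀ ξ ∈ cap n θ, 0 < h ξ

/-- Convexity of a solution: `∇²h + hσ > 0` on the cap. -/
def IsConvexSol (n : ℕ) (θ : ℝ) (h : Euc n → ℝ) : Prop :=
  ∀ ξ ∈ cap n θ, ∀ X : Euc n, IsTangent n θ ξ X → X ≠ 0 →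
    0 < shess n θ h ξ X X + h ξ * ⟪X, X⟫

/-- The right-hand side `f·h^{p-1}·(h² + |∇h|²)^{(n+1-q)/2}`. -/
def eqRHS (n : ℕ) (θ p q : ℝ) (f h : Euc n → ℝ) (ξ : Euc n) : ℝ :=
  f ξ * h ξ ^ (p - 1) * (h ξ ^ 2 + ‖sgrad n θ h ξ‖ ^ 2) ^ (((n : ℝ) + 1 - q) / 2)

/-- `h` solves `det(∇²h + hσ) = f·h^{p-1}(h² + |∇h|²)^{(n+1-q)/2}` in `C_θ`. -/
def SolvesEq (n : ℕ) (θ p q : ℝ) (f h : Euc n → ℝ) : Prop :=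
  ∀ ξ ∈ cap n θ, sdet n θ h ξ = eqRHS n θ p q f h ξ

/-- Robin boundary condition `∇_μ h = cot θ · h` on `∂C_θ`. -/
def RobinBC (n : ℕ) (θ : ℝ) (h : Euc n → ℝ) : Prop :=
  ∀ ξ ∈ capBdry n θ, ⟪sgrad n θ h ξ, conormal n θ ξ⟫ = Real.cot θ * h ξ

/-- `l(ξ) = sin²θ + cos θ·⟨ξ, e⟩`. -/
def lFun (n : ℕ) (θ : ℝ) (ξ : Euc n) : ℝ :=
  Real.sin θ ^ 2 + Real.cos θ * ⟪ξ, eVec n⟫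

/-- `‖f‖_{C⁰(C_θ)} ≤ K`. -/
def CZeroNormLe (n : ℕ) (θ : ℝ) (f : Euc n → ℝ) (K : ℝ) : Prop :=
  ∀ ξ ∈ cap n θ, |f ξ| ≤ K

/-- `‖f‖_{C¹(C_θ)} ≤ K`. -/
def COneNormLe (n : ℕ) (θ : ℝ) (f : Euc n → ℝ) (K : ℝ) : Prop :=
  CZeroNormLe n θ f K ∧ ∀ ξ ∈ cap n θ, ‖sgrad n θ f ξ‖ ≤ K

/-- `‖f‖_{C²(C_θ)} ≤ K`. -/
def CTwoNormLe (n : ℕ) (θ : ℝ) (f : Euc n → ℝ) (K : ℝ) : Prop :=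
  COneNormLe n θ f K ∧
    ∀ ξ ∈ cap n θ, ∀ X Y : Euc n, IsTangent n θ ξ X → IsTangent n θ ξ Y →
      |shess n θ f ξ X Y| ≤ K * ‖X‖ * ‖Y‖

/-- The linearized operator `L_h(γ)` of the equation `𝒢(∇²h,h) = 𝒥₁(∇h,h)` at `h`:
the derivative at `ε = 0` of `𝒢 - 𝒥₁` along the variation `h_ε = h·e^{εγ}`
(cf. equation (5.4) of the paper, which is exactly this derivative). -/
def linOp (n : ℕ) (θ p q : ℝ) (f h γ : Euc n → ℝ) (ξ : Euc n) : ℝ :=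
  deriv (fun ε : ℝ =>
    sdet n θ (fun x => h x * Real.exp (ε * γ x)) ξ
      - eqRHS n θ p q f (fun x => h x * Real.exp (ε * γ x)) ξ) 0

/-- Endomorphism acting as `l·∇²u + cos θ·(∇u ⊗ e^T + e^T ⊗ ∇u) + uσ` on the tangent space
and as the identity on the normal line. -/
def capillaryOp (n : ℕ) (θ : ℝ) (u : Euc n → ℝ) (ξ : Euc n) : Euc n →L[ℝ] Euc n :=
  lFun n θ ξ • thessOp n θ u ξ
    + Real.cos θ • ((innerSL ℝ (sgrad n θ u ξ)).smulRight (tproj n θ ξ (eVec n))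
        + (innerSL ℝ (tproj n θ ξ (eVec n))).smulRight (sgrad n θ u ξ))
    + u ξ • tproj n θ ξ + normalPart n θ ξ

/-- Endomorphism acting as `∇²v + ∇v ⊗ ∇v + σ` on the tangent space and as the identity on
the normal line. -/
def logOp (n : ℕ) (θ : ℝ) (v : Euc n → ℝ) (ξ : Euc n) : Euc n →L[ℝ] Euc n :=
  thessOp n θ v ξ + (innerSL ℝ (sgrad n θ v ξ)).smulRight (sgrad n θ v ξ)
    + tproj n θ ξ + normalPart n θ ξ

/-- Geodesic distance on `C_θ` from `ξ` to the top point `N = (0,…,0,1-cos θ)`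
(for `θ ∈ (0,π/2)` the cap is geodesically convex, so this is `arccos ⟨ν(ξ), ν(N)⟩`). -/
def distToTop (n : ℕ) (θ : ℝ) (ξ : Euc n) : ℝ :=
  Real.arccos (ξ (Fin.last n) + Real.cos θ)

/-- The function `d := d_N²/(2θ)`. -/
def dCap (n : ℕ) (θ : ℝ) (ξ : Euc n) : ℝ := distToTop n θ ξ ^ 2 / (2 * θ)

section

theorem aux_det_deriv {m : ℕ} (M : ℝ → Matrix (Fin m) (Fin m) ℝ) (M' : Matrix (Fin m) (Fin m) ℝ)
    (lam : Fin m → ℝ) (t0 : ℝ) (hM : ∀ i j, HasDerivAt (fun t => M t i j) (M' i j) t0)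
    (h0 : M t0 = Matrix.diagonal lam) :
    HasDerivAt (fun t => (M t).det) (∑ i, (∏ j ∈ Finset.univ.erase i, lam j) * M' i i) t0 := by
  have h1 : HasDerivAt (fun t => (M t).det)
      (∑ σ : Equiv.Perm (Fin m), ((Equiv.Perm.sign σ : ℤ) : ℝ) *
        ∑ i, (∏ j ∈ Finset.univ.erase i, M t0 (σ j) j) * M' (σ i) i) t0 := by
    have h2 : (fun t => (M t).det) = fun t => ∑ σ : Equiv.Perm (Fin m),
        ((Equiv.Perm.sign σ : ℤ) : ℝ) * ∏ i, M t (σ i) i := by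
      funext t; rw [Matrix.det_apply']
    rw [h2]
    refine HasDerivAt.fun_sum fun σ _ => ?_
    refine HasDerivAt.const_mul _ ?_
    have := HasDerivAt.fun_finsetProd (u := Finset.univ) (f := fun i t => M t (σ i) i)
      (f' := fun i => M' (σ i) i) (x := t0) (fun i _ => hM _ _)
    simpa [smul_eq_mul] using this
  convert h1 using 1
  rw [Finset.sum_eq_single (1 : Equiv.Perm (Fin m))]
  · simp [h0]
  · intro σ _ hσ
    rw [Finset.sum_eq_zero, mul_zero]
    intro i _
    obtain ⟨k, hk⟩ : ∃ k, σ k ≠ k := by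
      by_contra hc
      push Not at hc
      exact hσ (Equiv.ext hc)
    have : ∃ j, j ≠ i ∧ σ j ≠ j := by
      by_cases hki : k = i
      · refine ⟨σ k, ?_, fun h => hk (σ.injective h)⟩
        rw [← hki]; exact hk
      · exact ⟨k, hki, hk⟩
    obtain ⟨j, hj, hσj⟩ := this
    rw [Finset.prod_eq_zero (i := j), zero_mul]
    · simp [hj]
    · rw [h0, Matrix.diagonal_apply_ne _ hσj]
  · simp

variable {V : Type*} [NormedAddCommGroup V] [InnerProductSpace ℝ V]

theorem aux_line (x w : V) (t : ℝ) : HasDerivAt (fun s : ℝ => x + s • w) w t := by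
  simpa using ((hasDerivAt_id t).smul_const w).const_add x

theorem aux_grad_chain [CompleteSpace V] {F : V → ℝ} {g : V} {c : ℝ → V} {c' : V} {t : ℝ}
    (hF : HasGradientAt F g (c t)) (hc : HasDerivAt c c' t) :
    HasDerivAt (fun s => F (c s)) ⟪g, c'⟫ t := by
  have := hF.hasFDerivAt.comp_hasDerivAt t hc
  rw [InnerProductSpace.toDual_apply_apply] at this
  exact this

theorem aux_det_deriv' {m : ℕ} [FiniteDimensional ℝ V] (b : OrthonormalBasis (Fin m) ℝ V)
    (M : ℝ → V →L[ℝ] V) (M' : V →L[ℝ] V) (t0 : ℝ)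
    (lam : Fin m → ℝ) (hM : ∀ v, HasDerivAt (fun t => M t v) (M' v) t0) (h0 : ∀ i, M t0 (b i) = lam i • b i)
    (hl : ∀ i, 0 < lam i) :
    HasDerivAt (fun t => LinearMap.det (M t).toLinearMap)
      (LinearMap.det (M t0).toLinearMap * ∑ i, (lam i)⁻¹ * ⟪M' (b i), b i⟫) t0
      ∧ LinearMap.det (M t0).toLinearMap = ∏ i, lam i := by
  have hd : ∀ t, LinearMap.det (M t).toLinearMap
      = Matrix.det (Matrix.of fun i j => ⟪b i, M t (b j)⟫) := by
    intro t
    rw [← LinearMap.det_toMatrix b.toBasis]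
    congr 1
    ext i j
    simp [LinearMap.toMatrix_apply, OrthonormalBasis.repr_apply_apply]
  have hdiag : (Matrix.of fun i j => ⟪b i, M t0 (b j)⟫) = Matrix.diagonal lam := by
    ext i j
    simp only [Matrix.of_apply, h0, inner_smul_right]
    rw [orthonormal_iff_ite.mp b.orthonormal i j, Matrix.diagonal_apply]
    split_ifs with h
    · simp [h]
    · simp
  have hdet : LinearMap.det (M t0).toLinearMap = ∏ i, lam i := by
    rw [hd, hdiag, Matrix.det_diagonal]
  refine ⟨?_, hdet⟩
  have := aux_det_deriv (fun t => Matrix.of fun i j => ⟪b i, M t (b j)⟫)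
    (Matrix.of fun i j => ⟪b i, M' (b j)⟫) lam t0 (fun i j => by
      simp only [Matrix.of_apply]
      have h1 : HasDerivAt (fun t => M t (b j)) (M' (b j)) t0 := hM _
      simpa using (hasDerivAt_const t0 (b i)).inner ℝ h1) hdiag
  simp_rw [hd]
  rw [hdiag, Matrix.det_diagonal, Finset.mul_sum]
  convert this using 1
  refine Finset.sum_congr rfl fun i _ => ?_
  rw [← Finset.mul_prod_erase _ _ (Finset.mem_univ i), Matrix.of_apply, real_inner_comm]
  field_simp [(hl i).ne']

theorem aux_second_test [CompleteSpace V] (F : V → ℝ) (g : V → V) (B : V →L[ℝ] V) (x : V)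
    (hg : ∀ᶠ y in nhds x, HasGradientAt F (g y) y) (hB : HasFDerivAt g B x)
    (hmin : IsLocalMin F x) : g x = 0 ∧ ∀ w, 0 ≤ ⟪B w, w⟫ := by
  constructor
  · have h1 := hg.self_of_nhds
    have := hmin.hasFDerivAt_eq_zero h1.hasFDerivAt
    simpa using this
  · intro w
    by_contra hneg
    push Not at hneg
    set φ : ℝ → ℝ := fun t => F (x + t • w) with hφ
    have hcont : Filter.Tendsto (fun t : ℝ => x + t • w) (nhds 0) (nhds x) := by
      have : Continuous (fun t : ℝ => x + t • w) := by fun_prop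
      simpa using this.tendsto 0
    have hline := aux_line x w
    have hd : ∀ᶠ t in nhds (0:ℝ), HasDerivAt φ ⟪g (x + t • w), w⟫ t := by
      filter_upwards [hcont.eventually hg] with t ht
      exact aux_grad_chain ht (hline t)
    have hderiv : deriv φ =ᶠ[nhds 0] fun t => ⟪g (x + t • w), w⟫ := by
      filter_upwards [hd] with t ht using ht.deriv
    have hdd : HasDerivAt (fun t : ℝ => ⟪g (x + t • w), w⟫) ⟪B w, w⟫ 0 := by
      have h2 : HasDerivAt (fun t : ℝ => g (x + t • w)) (B w) 0 := by
        have h3 : HasFDerivAt g B (x + (0:ℝ) • w) := by simpa using hB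
        exact h3.comp_hasDerivAt 0 (hline 0)
      simpa using h2.inner ℝ (hasDerivAt_const 0 w)
    have hdd' : deriv (deriv φ) 0 = ⟪B w, w⟫ := by
      rw [hderiv.deriv_eq]; exact hdd.deriv
    have hminφ : IsLocalMin φ 0 := by
      have : ∀ᶠ y in nhds x, F x ≤ F y := hmin
      have h4 := hcont.eventually this
      filter_upwards [h4] with t ht
      simpa [hφ] using ht
    have hmaxφ : IsLocalMax φ 0 := by
      apply isLocalMax_of_deriv_deriv_neg
      · rw [hdd']; exact hneg
      · exact hminφ.deriv_eq_zero
      · exact hd.self_of_nhds.continuousAt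
    have hconst : φ =ᶠ[nhds 0] fun _ => φ 0 := by
      filter_upwards [hminφ, hmaxφ] with t h5 h6
      exact le_antisymm h6 h5
    have h7 : deriv φ =ᶠ[nhds 0] fun _ => 0 := by
      have := hconst.deriv
      simpa using this
    have h8 : deriv (deriv φ) 0 = 0 := by
      rw [h7.deriv_eq]; simp
    linarith

/-- symmetric positive operator: eigenbasis -/
theorem aux_eigen {m : ℕ} [FiniteDimensional ℝ V] (hm : Module.finrank ℝ V = m)
    (M : V →L[ℝ] V) (hs : ∀ a b, ⟪M a, b⟫ = ⟪a, M b⟫) (hp : ∀ a, a ≠ 0 → 0 < ⟪M a, a⟫) :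
    ∃ (b : OrthonormalBasis (Fin m) ℝ V) (lam : Fin m → ℝ), (∀ i, 0 < lam i) ∧
      ∀ i, M (b i) = lam i • b i := by
  have hT : M.toLinearMap.IsSymmetric := fun a b => hs a b
  refine ⟨hT.eigenvectorBasis hm, hT.eigenvalues hm, ?_, ?_⟩
  · intro i
    have h1 := hT.apply_eigenvectorBasis hm i
    have h2 := hp (hT.eigenvectorBasis hm i) ((hT.eigenvectorBasis hm).orthonormal.ne_zero i)
    have h3 : M (hT.eigenvectorBasis hm i) = hT.eigenvalues hm i • hT.eigenvectorBasis hm i := h1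
    rw [h3, inner_smul_left] at h2
    simpa using h2
  · intro i
    exact hT.apply_eigenvectorBasis hm i

/-- product estimate -/
theorem aux_prod {m : ℕ} (lam a : Fin m → ℝ) (hl : ∀ i, 0 < lam i) (N D : ℝ) (hN : 0 ≤ N)
    (hD : ∑ i, (lam i)⁻¹ * (1 + N * a i ^ 2) ≤ D) :
    1 + N * ∑ i, a i ^ 2 ≤ D ^ m * ∏ i, lam i := by
  have hz : ∀ i, 0 ≤ (lam i)⁻¹ * (1 + N * a i ^ 2) := fun i => by
    have := hl i; positivity
  have h1 : ∏ i, ((lam i)⁻¹ * (1 + N * a i ^ 2)) ≤ ∏ _i : Fin m, D := by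
    refine Finset.prod_le_prod (fun i _ => hz i) fun i _ => ?_
    exact (Finset.single_le_sum (fun j _ => hz j) (Finset.mem_univ i)).trans hD
  have h2 : 1 + N * ∑ i, a i ^ 2 ≤ ∏ i, (1 + N * a i ^ 2) := by
    rw [Finset.mul_sum]
    have : ∀ s : Finset (Fin m), 1 + ∑ i ∈ s, N * a i ^ 2 ≤ ∏ i ∈ s, (1 + N * a i ^ 2) := by
      intro s
      induction s using Finset.induction_on with
      | empty => simp
      | insert i s hi ih =>
        rw [Finset.sum_insert hi, Finset.prod_insert hi]
        have h3 : 0 ≤ ∑ i ∈ s, N * a i ^ 2 := Finset.sum_nonneg fun i _ => by positivity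
        have h4 : 0 ≤ N * a i ^ 2 := by positivity
        nlinarith
    exact this _
  have h5 : 0 < ∏ i, lam i := Finset.prod_pos fun i _ => hl i
  rw [Finset.prod_mul_distrib, Finset.prod_inv_distrib, Finset.prod_const, Finset.card_univ,
    Fintype.card_fin] at h1
  calc _ ≤ _ := h2
    _ = ((∏ i, lam i)⁻¹ * ∏ i, (1 + N * a i ^ 2)) * ∏ i, lam i := by field_simp
    _ ≤ _ := by gcongr

theorem aux_rpow {x m M : ℝ} (r : ℝ) (hm : 0 < m) (h1 : m ≤ x) (h2 : x ≤ M) :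
    x ^ r ≤ m ^ r + M ^ r := by
  have hx : 0 < x := hm.trans_le h1
  rcases le_total 0 r with hr | hr
  · have := Real.rpow_le_rpow hx.le h2 hr
    have := Real.rpow_nonneg hm.le r
    linarith
  · have := Real.rpow_le_rpow_of_nonpos hm h1 hr
    have := Real.rpow_nonneg (hx.le.trans h2) r
    linarith
end

section

/-- the top unit vector -/
def eTop (n : ℕ) : Euc n := EuclideanSpace.single (Fin.last n) (1 : ℝ)

def nh {n : ℕ} (x : Euc n) : Euc n := ‖x‖⁻¹ • x

def piC (n : ℕ) (θ : ℝ) (x : Euc n) : Euc n := nh x + Real.cos θ • eVec n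

def Hx (n : ℕ) (θ : ℝ) (h : Euc n → ℝ) (x : Euc n) : ℝ := ‖x‖ * h (piC n θ x)

def Gx (n : ℕ) (θ : ℝ) (h : Euc n → ℝ) (x : Euc n) : Euc n :=
  h (piC n θ x) • nh x + (gradient h (piC n θ x) - ⟪nh x, gradient h (piC n θ x)⟫ • nh x)

def T0 (n : ℕ) (θ : ℝ) (h : Euc n → ℝ) (ξ : Euc n) : Euc n →L[ℝ] Euc n :=
  thessOp n θ h ξ + h ξ • tproj n θ ξ

/-- projection -/
def Pj {n : ℕ} (x : Euc n) : Euc n →L[ℝ] Euc n :=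
  ContinuousLinearMap.id ℝ (Euc n) - (innerSL ℝ (nh x)).smulRight (nh x)

theorem Pj_apply {n : ℕ} (x w : Euc n) : Pj x w = w - ⟪nh x, w⟫ • nh x := by
  simp [Pj]

theorem sphNormal_piC (n : ℕ) (θ : ℝ) (x : Euc n) : sphNormal n θ (piC n θ x) = nh x := by
  simp [sphNormal, piC]

theorem tproj_piC (n : ℕ) (θ : ℝ) (x : Euc n) : tproj n θ (piC n θ x) = Pj x := by
  simp [tproj, Pj, sphNormal_piC]

theorem norm_nh {n : ℕ} {x : Euc n} (hx : x ≠ 0) : ‖nh x‖ = 1 := by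
  have : ‖x‖ ≠ 0 := by simpa using hx
  rw [nh, norm_smul, norm_inv, norm_norm]
  field_simp

theorem inner_nh_nh {n : ℕ} {x : Euc n} (hx : x ≠ 0) : ⟪nh x, nh x⟫ = 1 := by
  rw [real_inner_self_eq_norm_sq, norm_nh hx]; norm_num

theorem nh_unit {n : ℕ} {x : Euc n} (hx : ‖x‖ = 1) : nh x = x := by simp [nh, hx]

theorem norm_smul_nh {n : ℕ} {x : Euc n} (hx : x ≠ 0) : ‖x‖ • nh x = x := by
  have : ‖x‖ ≠ 0 := by simpa using hx
  rw [nh, smul_smul, mul_inv_cancel₀ this, one_smul]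

theorem hasFDerivAt_norm' {n : ℕ} {x : Euc n} (hx : x ≠ 0) :
    HasFDerivAt (fun y : Euc n => ‖y‖) (innerSL ℝ (nh x)) x := by
  have hn : ‖x‖ ≠ 0 := by simpa using hx
  have h1 : HasFDerivAt (fun y : Euc n => ‖y‖ ^ 2) (2 • innerSL ℝ x) x :=
    (hasStrictFDerivAt_norm_sq x).hasFDerivAt
  have h2 := h1.sqrt (by positivity)
  have h3 : (fun y : Euc n => √(‖y‖ ^ 2)) = fun y => ‖y‖ := by
    funext y; exact Real.sqrt_sq (norm_nonneg y)
  rw [h3] at h2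
  refine HasFDerivAt.congr_fderiv h2 ?_
  ext1 w
  simp [nh, Real.sqrt_sq (norm_nonneg x)]
  ring

theorem hasFDerivAt_nh {n : ℕ} {x : Euc n} (hx : x ≠ 0) :
    HasFDerivAt (nh (n := n)) (‖x‖⁻¹ • Pj x) x := by
  have hn : ‖x‖ ≠ 0 := by simpa using hx
  have h1 : HasFDerivAt (fun y : Euc n => ‖y‖⁻¹) _ x := (hasDerivAt_inv hn).comp_hasFDerivAt x (hasFDerivAt_norm' hx)
  have h2 := h1.smul (hasFDerivAt_id x)
  refine HasFDerivAt.congr_fderiv h2 ?_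
  ext1 w
  simp [Pj_apply, nh, smul_smul, smul_sub, real_inner_smul_left]
  module

theorem hasFDerivAt_piC {n : ℕ} (θ : ℝ) {x : Euc n} (hx : x ≠ 0) :
    HasFDerivAt (piC n θ) (‖x‖⁻¹ • Pj x) x :=
  (hasFDerivAt_nh hx).add_const _

theorem hasFDerivAt_comp_piC {n : ℕ} (θ : ℝ) {h : Euc n → ℝ} (hh : ContDiff ℝ (⊤ : ℕ∞) h)
    {x : Euc n} (hx : x ≠ 0) :
    HasFDerivAt (fun y => h (piC n θ y))
      (‖x‖⁻¹ • (innerSL ℝ (gradient h (piC n θ x))).comp (Pj x)) x := by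
  have hd : DifferentiableAt ℝ h (piC n θ x) := (hh.differentiable (by simp)).differentiableAt
  have h1 := hd.hasGradientAt.hasFDerivAt.comp x (hasFDerivAt_piC θ hx)
  refine HasFDerivAt.congr_fderiv h1 ?_
  ext w
  simp 

theorem contDiff_gradient {n : ℕ} {h : Euc n → ℝ} (hh : ContDiff ℝ (⊤ : ℕ∞) h) :
    ContDiff ℝ (⊤ : ℕ∞) (gradient h) := by
  have : gradient h = fun x => (InnerProductSpace.toDual ℝ (Euc n)).symm (fderiv ℝ h x) := rfl
  rw [this]
  exact (InnerProductSpace.toDual ℝ (Euc n)).symm.contDiff.comp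
    (hh.fderiv_right (m := (⊤ : ℕ∞)) (by simp))

theorem hasGradientAt_Hx {n : ℕ} (θ : ℝ) {h : Euc n → ℝ} (hh : ContDiff ℝ (⊤ : ℕ∞) h)
    {x : Euc n} (hx : x ≠ 0) : HasGradientAt (Hx n θ h) (Gx n θ h x) x := by
  have hn : ‖x‖ ≠ 0 := by simpa using hx
  rw [hasGradientAt_iff_hasFDerivAt]
  have h1 := (hasFDerivAt_norm' hx).mul (hasFDerivAt_comp_piC θ hh hx)
  refine HasFDerivAt.congr_fderiv h1 ?_
  ext1 w
  simp [Gx, Pj_apply, inner_sub_right, inner_smul_right]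
  field_simp
  ring

theorem hasFDerivAt_Gx {n : ℕ} (θ : ℝ) {h : Euc n → ℝ} (hh : ContDiff ℝ (⊤ : ℕ∞) h)
    {x : Euc n} (hx : x ≠ 0) :
    HasFDerivAt (Gx n θ h) (‖x‖⁻¹ • T0 n θ h (piC n θ x)) x := by
  have hn : ‖x‖ ≠ 0 := by simpa using hx
  have hnn := inner_nh_nh hx
  have hg : DifferentiableAt ℝ (gradient h) (piC n θ x) :=
    ((contDiff_gradient hh).differentiable (by simp)).differentiableAt
  have h1 := hg.hasFDerivAt.comp x (hasFDerivAt_piC θ hx)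
  have h2 := ((hasFDerivAt_comp_piC θ hh hx).smul (hasFDerivAt_nh hx)).add
    (h1.sub (((hasFDerivAt_nh hx).inner ℝ h1).smul (hasFDerivAt_nh hx)))
  refine HasFDerivAt.congr_fderiv h2 ?_
  ext1 w
  simp only [T0, thessOp, tproj_piC, sphNormal_piC]
  simp [Pj_apply, real_inner_smul_right]
  module

theorem contDiffAt_Gx {n : ℕ} (θ : ℝ) {h : Euc n → ℝ} (hh : ContDiff ℝ (⊤ : ℕ∞) h)
    {x : Euc n} (hx : x ≠ 0) : ContDiffAt ℝ (⊤ : ℕ∞) (Gx n θ h) x := by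
  have h1 : ContDiffAt ℝ (⊤ : ℕ∞) (nh (n := n)) x := by
    unfold nh
    exact ((contDiffAt_norm ℝ hx).inv (by simpa using hx)).smul contDiffAt_id
  have h2 : ContDiffAt ℝ (⊤ : ℕ∞) (piC n θ) x := h1.add contDiffAt_const
  have h3 := hh.contDiffAt.comp x h2
  have h4 := (contDiff_gradient hh).contDiffAt.comp x h2
  exact (h3.smul h1).add (h4.sub ((h1.inner ℝ h4).smul h1))

end

section

/-- Hessian of the homogeneous extension -/
def Tx (n : ℕ) (θ : ℝ) (h : Euc n → ℝ) (x : Euc n) : Euc n →L[ℝ] Euc n := fderiv ℝ (Gx n θ h) x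

/-- third derivative -/
def Dx (n : ℕ) (θ : ℝ) (h : Euc n → ℝ) (x : Euc n) : Euc n →L[ℝ] Euc n →L[ℝ] Euc n :=
  fderiv ℝ (Tx n θ h) x

theorem Tx_eq {n : ℕ} (θ : ℝ) {h : Euc n → ℝ} (hh : ContDiff ℝ (⊤ : ℕ∞) h)
    {x : Euc n} (hx : x ≠ 0) : Tx n θ h x = ‖x‖⁻¹ • T0 n θ h (piC n θ x) :=
  (hasFDerivAt_Gx θ hh hx).fderiv

theorem hasFDerivAt_Gx' {n : ℕ} (θ : ℝ) {h : Euc n → ℝ} (hh : ContDiff ℝ (⊤ : ℕ∞) h)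
    {x : Euc n} (hx : x ≠ 0) : HasFDerivAt (Gx n θ h) (Tx n θ h x) x := by
  rw [Tx_eq θ hh hx]; exact hasFDerivAt_Gx θ hh hx

theorem hasFDerivAt_Tx {n : ℕ} (θ : ℝ) {h : Euc n → ℝ} (hh : ContDiff ℝ (⊤ : ℕ∞) h)
    {x : Euc n} (hx : x ≠ 0) : HasFDerivAt (Tx n θ h) (Dx n θ h x) x := by
  have h1 : ContDiffAt ℝ 1 (fderiv ℝ (Gx n θ h)) x :=
    (contDiffAt_Gx θ hh hx).fderiv_right (m := 1) (by norm_cast)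
  exact (h1.differentiableAt (by simp)).hasFDerivAt

theorem eventually_ne_zero {n : ℕ} {x : Euc n} (hx : x ≠ 0) : ∀ᶠ y in nhds x, y ≠ 0 :=
  isOpen_ne.mem_nhds hx

theorem Tx_symm {n : ℕ} (θ : ℝ) {h : Euc n → ℝ} (hh : ContDiff ℝ (⊤ : ℕ∞) h)
    {x : Euc n} (hx : x ≠ 0) (a b : Euc n) : ⟪Tx n θ h x a, b⟫ = ⟪a, Tx n θ h x b⟫ := by
  have h1 : ∀ᶠ y in nhds x, HasFDerivAt (Hx n θ h) (innerSL ℝ (Gx n θ h y)) y := by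
    filter_upwards [eventually_ne_zero hx] with y hy
    exact (hasGradientAt_Hx θ hh hy).hasFDerivAt
  have h2 : HasFDerivAt (fun y => innerSL ℝ (Gx n θ h y)) ((innerSL ℝ).comp (Tx n θ h x)) x :=
    (innerSL ℝ).hasFDerivAt.comp x (hasFDerivAt_Gx' θ hh hx)
  have h3 := second_derivative_symmetric_of_eventually (𝕜 := ℝ) h1 h2 a b
  simp only [ContinuousLinearMap.comp_apply, innerSL_apply_apply] at h3
  rw [h3, real_inner_comm]

theorem Dx_symm {n : ℕ} (θ : ℝ) {h : Euc n → ℝ} (hh : ContDiff ℝ (⊤ : ℕ∞) h)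
    {x : Euc n} (hx : x ≠ 0) (a b : Euc n) : Dx n θ h x a b = Dx n θ h x b a := by
  have h1 : ∀ᶠ y in nhds x, HasFDerivAt (Gx n θ h) (Tx n θ h y) y := by
    filter_upwards [eventually_ne_zero hx] with y hy
    exact hasFDerivAt_Gx' θ hh hy
  exact second_derivative_symmetric_of_eventually (𝕜 := ℝ) h1 (hasFDerivAt_Tx θ hh hx) a b

theorem hasFDerivAt_Tx_apply {n : ℕ} (θ : ℝ) {h : Euc n → ℝ} (hh : ContDiff ℝ (⊤ : ℕ∞) h)
    {x : Euc n} (hx : x ≠ 0) (b : Euc n) :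
    HasFDerivAt (fun y => Tx n θ h y b) ((Dx n θ h x).flip b) x := by
  have := (hasFDerivAt_Tx θ hh hx).clm_apply (hasFDerivAt_const b x)
  refine HasFDerivAt.congr_fderiv this ?_
  ext1 w
  simp

theorem eTop_norm (n : ℕ) : ‖eTop n‖ = 1 := by simp [eTop]
theorem eTop_inner (n : ℕ) : ⟪eTop n, eTop n⟫ = 1 := by
  rw [real_inner_self_eq_norm_sq, eTop_norm]; norm_num
theorem eVec_eq (n : ℕ) : eVec n = - eTop n := rfl

theorem inner_eTop {n : ℕ} (x : Euc n) : ⟪eTop n, x⟫ = x (Fin.last n) := by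
  simp [eTop, EuclideanSpace.inner_single_left]

theorem piC_mem_cap {n : ℕ} (θ : ℝ) {x : Euc n} (hx : x ≠ 0) :
    piC n θ x ∈ cap n θ ↔ cos θ ≤ ⟪eTop n, nh x⟫ := by
  have h1 : (piC n θ x) (Fin.last n) = ⟪eTop n, nh x⟫ - cos θ := by
    rw [← inner_eTop, piC, eVec_eq, inner_add_right, inner_smul_right, inner_neg_right, eTop_inner]
    ring
  simp only [cap, Set.mem_setOf_eq, sphNormal_piC, norm_nh hx, h1, and_true]
  constructor <;> intro h <;> linarith

theorem hessOp_eq (n : ℕ) (θ : ℝ) (h : Euc n → ℝ) (x w : Euc n) :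
    hessOp n θ h (piC n θ x) w = T0 n θ h (piC n θ x) w + ⟪nh x, w⟫ • nh x := by
  simp [hessOp, T0, normalPart, sphNormal_piC]

theorem Pj_nh {n : ℕ} {x : Euc n} (hx : x ≠ 0) : Pj x (nh x) = 0 := by
  rw [Pj_apply, inner_nh_nh hx, one_smul, sub_self]

theorem T0_nh {n : ℕ} (θ : ℝ) (h : Euc n → ℝ) {x : Euc n} (hx : x ≠ 0) :
    T0 n θ h (piC n θ x) (nh x) = 0 := by
  simp [T0, thessOp, tproj_piC, Pj_nh hx]

theorem Tx_nh {n : ℕ} (θ : ℝ) {h : Euc n → ℝ} (hh : ContDiff ℝ (⊤ : ℕ∞) h)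
    {x : Euc n} (hx : x ≠ 0) : Tx n θ h x (nh x) = 0 := by
  rw [Tx_eq θ hh hx]; simp [T0_nh θ h hx]

theorem inner_nh_Pj {n : ℕ} {x : Euc n} (hx : x ≠ 0) (w : Euc n) : ⟪Pj x w, nh x⟫ = 0 := by
  rw [Pj_apply, inner_sub_left, real_inner_smul_left, inner_nh_nh hx, real_inner_comm]; ring

theorem inner_Pj {n : ℕ} {x : Euc n} (a b : Euc n) : ⟪Pj x a, b⟫ = ⟪a, Pj x b⟫ := by
  simp only [Pj_apply, inner_sub_left, inner_sub_right, real_inner_smul_left, real_inner_smul_right]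
  rw [real_inner_comm a (nh x)]; ring

theorem Pj_Pj {n : ℕ} {x : Euc n} (hx : x ≠ 0) (a : Euc n) : Pj x (Pj x a) = Pj x a := by
  conv_lhs => rw [Pj_apply x a, map_sub, map_smul, Pj_nh hx]
  simp

/-- T0 in terms of shess -/
theorem inner_T0 {n : ℕ} (θ : ℝ) (h : Euc n → ℝ) {x : Euc n} (hx : x ≠ 0) (w : Euc n) :
    ⟪T0 n θ h (piC n θ x) w, w⟫ = shess n θ h (piC n θ x) (Pj x w) (Pj x w)
      + h (piC n θ x) * ⟪Pj x w, Pj x w⟫ := by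
  simp only [T0, thessOp, tproj_piC, shess, ContinuousLinearMap.add_apply,
    ContinuousLinearMap.sub_apply, ContinuousLinearMap.comp_apply, ContinuousLinearMap.smul_apply,
    inner_add_left, inner_sub_left, real_inner_smul_left]
  rw [inner_Pj, inner_Pj w (Pj x w), Pj_Pj hx, ← inner_Pj w w]

theorem T0_nonneg {n : ℕ} {θ : ℝ} {h : Euc n → ℝ} (hc : IsConvexSol n θ h) {x : Euc n}
    (hx : x ≠ 0) (hcap : cos θ ≤ ⟪eTop n, nh x⟫) (w : Euc n) :
    0 ≤ ⟪T0 n θ h (piC n θ x) w, w⟫ ∧ (Pj x w ≠ 0 → 0 < ⟪T0 n θ h (piC n θ x) w, w⟫) := by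
  have key : Pj x w ≠ 0 → 0 < ⟪T0 n θ h (piC n θ x) w, w⟫ := by
    intro hne
    rw [inner_T0 θ h hx]
    apply hc _ ((piC_mem_cap θ hx).2 hcap) _ _ hne
    rw [IsTangent, sphNormal_piC, inner_nh_Pj hx]
  refine ⟨?_, key⟩
  by_cases h0 : Pj x w = 0
  · rw [inner_T0 θ h hx, h0]
    simp [shess]
  · exact (key h0).le

theorem hessOp_pos {n : ℕ} {θ : ℝ} {h : Euc n → ℝ} (hc : IsConvexSol n θ h) {x : Euc n}
    (hx : x ≠ 0) (hcap : cos θ ≤ ⟪eTop n, nh x⟫) (w : Euc n) (hw : w ≠ 0) :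
    0 < ⟪hessOp n θ h (piC n θ x) w, w⟫ := by
  rw [hessOp_eq, inner_add_left, real_inner_smul_left]
  obtain ⟨h1, h2⟩ := T0_nonneg hc hx hcap w
  by_cases h0 : Pj x w = 0
  · have h3 : w = ⟪nh x, w⟫ • nh x := by
      rw [Pj_apply] at h0
      exact sub_eq_zero.mp h0
    have h4 : ⟪nh x, w⟫ ≠ 0 := by
      intro h5; rw [h5, zero_smul] at h3; exact hw h3
    have : 0 < ⟪nh x, w⟫ * ⟪nh x, w⟫ := mul_self_pos.2 h4
    linarith
  · have := h2 h0
    nlinarith [mul_self_nonneg ⟪nh x, w⟫]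

theorem sgrad_eq {n : ℕ} (θ : ℝ) (h : Euc n → ℝ) (x : Euc n) :
    sgrad n θ h (piC n θ x) = Pj x (gradient h (piC n θ x)) := by
  rw [sgrad, tproj_piC]

theorem Gx_eq {n : ℕ} (θ : ℝ) (h : Euc n → ℝ) (x : Euc n) :
    Gx n θ h x = h (piC n θ x) • nh x + sgrad n θ h (piC n θ x) := by
  rw [sgrad_eq, Gx, Pj_apply]

theorem Gx_inner_nh {n : ℕ} (θ : ℝ) (h : Euc n → ℝ) {x : Euc n} (hx : x ≠ 0) :
    ⟪Gx n θ h x, nh x⟫ = h (piC n θ x) := by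
  rw [Gx_eq, inner_add_left, sgrad_eq, inner_nh_Pj hx, real_inner_smul_left, inner_nh_nh hx]; ring

theorem Gx_normsq {n : ℕ} (θ : ℝ) (h : Euc n → ℝ) {x : Euc n} (hx : x ≠ 0) :
    ‖Gx n θ h x‖ ^ 2 = h (piC n θ x) ^ 2 + ‖sgrad n θ h (piC n θ x)‖ ^ 2 := by
  rw [Gx_eq, norm_add_sq_real, real_inner_smul_left, sgrad_eq, real_inner_comm, inner_nh_Pj hx,
    norm_smul, norm_nh hx]
  simp

theorem eqRHS_eq {n : ℕ} (θ p q : ℝ) (f h : Euc n → ℝ) {x : Euc n} (hx : x ≠ 0) :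
    eqRHS n θ p q f h (piC n θ x) = f (piC n θ x) * h (piC n θ x) ^ (p - 1) *
      (‖Gx n θ h x‖ ^ 2) ^ (((n : ℝ) + 1 - q) / 2) := by
  rw [eqRHS, Gx_normsq θ h hx]

theorem Gx_homog {n : ℕ} (θ : ℝ) (h : Euc n → ℝ) {x : Euc n} (hx : x ≠ 0) :
    Gx n θ h (nh x) = Gx n θ h x := by
  have : nh (nh x) = nh x := nh_unit (norm_nh hx)
  simp [Gx, piC, this]

/-- gradient of the height -/
def gs {n : ℕ} (y : Euc n) : Euc n := ‖y‖⁻¹ • Pj y (eTop n)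

theorem hasGradientAt_S {n : ℕ} {x : Euc n} (hx : x ≠ 0) :
    HasGradientAt (fun y => ⟪eTop n, nh y⟫) (gs x) x := by
  rw [hasGradientAt_iff_hasFDerivAt]
  have := (hasFDerivAt_const (eTop n) x).inner ℝ (hasFDerivAt_nh hx)
  refine HasFDerivAt.congr_fderiv this ?_
  ext1 w
  simp [gs, real_inner_smul_left, real_inner_smul_right]
  rw [inner_Pj]; simp

theorem hasFDerivAt_gs {n : ℕ} {x : Euc n} (hx : ‖x‖ = 1) :
    ∃ B : Euc n →L[ℝ] Euc n, HasFDerivAt (gs (n := n)) B x ∧ ∀ w, ⟪B w, w⟫ =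
      - 2 * ⟪x, w⟫ * ⟪Pj x (eTop n), w⟫ - ⟪eTop n, x⟫ * (⟪w, w⟫ - ⟪x, w⟫ ^ 2) := by
  have hx0 : x ≠ 0 := by intro h; simp [h] at hx
  have hn : ‖x‖ ≠ 0 := by simpa using hx0
  have h1 : HasFDerivAt (fun y : Euc n => ‖y‖⁻¹) _ x :=
    (hasDerivAt_inv hn).comp_hasFDerivAt x (hasFDerivAt_norm' hx0)
  have h2 := ((hasFDerivAt_nh hx0).inner ℝ (hasFDerivAt_const (eTop n) x)).smul (hasFDerivAt_nh hx0)
  have h3 := h1.smul (h2.const_sub (eTop n))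
  have h4 : gs (n := n) = (fun y : Euc n => ‖y‖⁻¹) • fun y => eTop n - ((fun t => ⟪nh t, eTop n⟫) • nh) y := by
    funext y
    simp [gs, Pj_apply]
  rw [← h4] at h3
  refine ⟨_, h3, fun w => ?_⟩
  simp [hx, nh_unit hx, Pj_apply, inner_sub_left, inner_sub_right, inner_add_left, real_inner_smul_left, real_inner_smul_right]
  rw [real_inner_comm (eTop n) w, real_inner_comm (eTop n) x]
  ring
end

section

theorem hessOp_eq' {n : ℕ} (θ : ℝ) {h : Euc n → ℝ} (hh : ContDiff ℝ (⊤ : ℕ∞) h)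
    {x : Euc n} (hx : x ≠ 0) (w : Euc n) :
    hessOp n θ h (piC n θ x) w = ‖x‖ • Tx n θ h x w + ⟪nh x, w⟫ • nh x := by
  have hn : ‖x‖ ≠ 0 := by simpa using hx
  rw [hessOp_eq, Tx_eq θ hh hx]
  simp [smul_smul, hn]

theorem continuousAt_S {n : ℕ} {x : Euc n} (hx : x ≠ 0) :
    ContinuousAt (fun y => ⟪eTop n, nh y⟫) x :=
  (hasGradientAt_S hx).differentiableAt.continuousAt

theorem linearized {n : ℕ} {θ p q : ℝ} {f h : Euc n → ℝ}
    (hf : ContDiff ℝ (⊤ : ℕ∞) f) (hfpos : ∀ ξ ∈ cap n θ, 0 < f ξ)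
    (hh : ContDiff ℝ (⊤ : ℕ∞) h) (hpos : PosOnCap n θ h) (hc : IsConvexSol n θ h)
    (hs : SolvesEq n θ p q f h) {x : Euc n} (hx : ‖x‖ = 1) (hcap : cos θ < ⟪eTop n, x⟫) :
    ∃ (b : OrthonormalBasis (Fin (n + 1)) ℝ (Euc n)) (lam : Fin (n + 1) → ℝ),
      (∀ i, 0 < lam i) ∧ (∏ i, lam i = eqRHS n θ p q f h (piC n θ x)) ∧
      (∀ i, (lam i)⁻¹ * ⟪x, b i⟫ = ⟪x, b i⟫) ∧
      ∑ i, (lam i)⁻¹ * ⟪Dx n θ h x (eTop n) (b i), b i⟫ =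
        (⟪gradient f (piC n θ x), Pj x (eTop n)⟫ / f (piC n θ x) +
        (p - 1) * ⟪gradient h (piC n θ x), Pj x (eTop n)⟫ / h (piC n θ x) +
        (n + 1 - q) * ⟪Tx n θ h x (eTop n), Gx n θ h x⟫ / ‖Gx n θ h x‖ ^ 2) - n * ⟪eTop n, x⟫ := by
  have hx0 : x ≠ 0 := by intro h; simp [h] at hx
  have hnx : nh x = x := nh_unit hx
  have hcap' : cos θ ≤ ⟪eTop n, nh x⟫ := by rw [hnx]; exact hcap.le
  have hmem : piC n θ x ∈ cap n θ := (piC_mem_cap θ hx0).2 hcap'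
  set E := eTop n with hE
  -- symmetric
  have hsym : ∀ a b, ⟪hessOp n θ h (piC n θ x) a, b⟫ = ⟪a, hessOp n θ h (piC n θ x) b⟫ := by
    intro a b
    rw [hessOp_eq' θ hh hx0, hessOp_eq' θ hh hx0]
    simp only [inner_add_left, inner_add_right, real_inner_smul_left, real_inner_smul_right]
    rw [Tx_symm θ hh hx0, real_inner_comm (nh x) a]
    ring
  obtain ⟨b, lam, hl, hb⟩ := aux_eigen (m := n + 1) (by simp) (hessOp n θ h (piC n θ x)) hsym
    (hessOp_pos hc hx0 hcap')
  refine ⟨b, lam, hl, ?_⟩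
  have hTx0 : Tx n θ h x x = 0 := by
    have := Tx_nh θ hh hx0; rwa [hnx] at this
  have hxb : ∀ i, lam i * ⟪x, b i⟫ = ⟪x, b i⟫ := by
    intro i
    have h1 := hsym x (b i)
    rw [hb i, hessOp_eq' θ hh hx0, hTx0, hnx, real_inner_smul_right, real_inner_self_eq_norm_sq, hx] at h1
    simp at h1
    linarith
  have hxb' : ∀ i, (lam i)⁻¹ * ⟪x, b i⟫ = ⟪x, b i⟫ := by
    intro i
    have := (hl i).ne'
    rw [← hxb i]; rw [← mul_assoc, inv_mul_cancel₀ this, one_mul, hxb i]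
  -- line
  have hline : HasDerivAt (fun t : ℝ => x + t • E) E 0 := aux_line x E 0
  have hx00 : x + (0:ℝ) • E = x := by simp
  have hl_c : Filter.Tendsto (fun t : ℝ => x + t • E) (nhds 0) (nhds x) := by
    have := hline.continuousAt.tendsto
    simpa using this
  have chain : ∀ {W : Type} [NormedAddCommGroup W] [NormedSpace ℝ W] (F : Euc n → W)
      (F' : Euc n →L[ℝ] W), HasFDerivAt F F' x → HasDerivAt (fun t : ℝ => F (x + t • E)) (F' E) 0 := by
    intro W _ _ F F' hF
    have hF' : HasFDerivAt F F' (x + (0:ℝ) • E) := by rw [hx00]; exact hF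
    exact hF'.comp_hasDerivAt 0 hline
  have hne : ∀ᶠ t in nhds (0:ℝ), x + t • E ≠ 0 := hl_c.eventually (eventually_ne_zero hx0)
  have hin : ∀ᶠ t in nhds (0:ℝ), cos θ < ⟪E, nh (x + t • E)⟫ := by
    have h1 : ∀ᶠ y in nhds x, cos θ < ⟪E, nh y⟫ :=
      (continuousAt_S hx0).eventually (lt_mem_nhds (by
        show cos θ < ⟪eTop n, nh x⟫
        rw [hnx]; exact hcap))
    exact hl_c.eventually h1
  -- derivative of the operator
  set P : Euc n := Pj x E with hP
  have dn : HasDerivAt (fun t : ℝ => ‖x + t • E‖) ⟪x, E⟫ 0 := by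
    simpa [hnx] using chain _ _ (hasFDerivAt_norm' hx0)
  have dnh : HasDerivAt (fun t : ℝ => nh (x + t • E)) P 0 := by
    simpa [hx] using chain _ _ (hasFDerivAt_nh hx0)
  set M' : Euc n →L[ℝ] Euc n := ⟪x, E⟫ • Tx n θ h x + Dx n θ h x E +
    ((innerSL ℝ x).smulRight P + (innerSL ℝ P).smulRight x) with hM'
  have hM : ∀ v, HasDerivAt (fun t : ℝ => hessOp n θ h (piC n θ (x + t • E)) v) (M' v) 0 := by
    intro v
    have d1 : HasDerivAt (fun t : ℝ => Tx n θ h (x + t • E) v) (Dx n θ h x E v) 0 := by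
      simpa using chain _ _ (hasFDerivAt_Tx_apply θ hh hx0 v)
    have d2 := (dn.smul d1).add ((dnh.inner ℝ (hasDerivAt_const 0 v)).smul dnh)
    have d3 : (fun t : ℝ => hessOp n θ h (piC n θ (x + t • E)) v) =ᶠ[nhds 0]
        (fun t => ‖x + t • E‖ • Tx n θ h (x + t • E) v + ⟪nh (x + t • E), v⟫ • nh (x + t • E)) := by
      filter_upwards [hne] with t ht
      exact hessOp_eq' θ hh ht v
    refine (HasDerivAt.congr_of_eventuallyEq d2 d3).congr_deriv ?_
    simp [hM', hx, hnx]
    abel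
  have hb0 : ∀ i, hessOp n θ h (piC n θ (x + (0:ℝ) • E)) (b i) = lam i • b i := by
    intro i; rw [hx00]; exact hb i
  obtain ⟨hdet1, hdet2⟩ := aux_det_deriv' b (fun t : ℝ => hessOp n θ h (piC n θ (x + t • E))) M' 0
    lam hM hb0 hl
  rw [hx00] at hdet2
  have hprod : ∏ i, lam i = eqRHS n θ p q f h (piC n θ x) := by
    rw [← hdet2]; exact hs _ hmem
  refine ⟨hprod, hxb', ?_⟩
  -- derivative of RHS
  have hfp : 0 < f (piC n θ x) := hfpos _ hmem
  have hhp : 0 < h (piC n θ x) := hpos _ hmem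
  have hG2 : 0 < ‖Gx n θ h x‖ ^ 2 := by
    rw [Gx_normsq θ h hx0]; positivity
  have df : HasDerivAt (fun t : ℝ => f (piC n θ (x + t • E))) ⟪gradient f (piC n θ x), P⟫ 0 := by
    have := chain _ _ (hasFDerivAt_comp_piC θ hf hx0)
    simpa [hx] using this
  have dh : HasDerivAt (fun t : ℝ => h (piC n θ (x + t • E))) ⟪gradient h (piC n θ x), P⟫ 0 := by
    have := chain _ _ (hasFDerivAt_comp_piC θ hh hx0)
    simpa [hx] using this
  have dG : HasDerivAt (fun t : ℝ => Gx n θ h (x + t • E)) (Tx n θ h x E) 0 :=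
    chain _ _ (hasFDerivAt_Gx' θ hh hx0)
  have dG2 := dG.norm_sq
  have dR := (df.mul (dh.rpow_const (p := p - 1) (Or.inl (by rw [hx00]; exact hhp.ne')))).mul
    (dG2.rpow_const (p := ((n : ℝ) + 1 - q) / 2) (Or.inl (by rw [hx00]; exact hG2.ne')))
  have heq : (fun t : ℝ => LinearMap.det (hessOp n θ h (piC n θ (x + t • E))).toLinearMap)
      =ᶠ[nhds 0] fun t => f (piC n θ (x + t • E)) * h (piC n θ (x + t • E)) ^ (p - 1) *
      (‖Gx n θ h (x + t • E)‖ ^ 2) ^ (((n : ℝ) + 1 - q) / 2) := by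
    filter_upwards [hne, hin] with t ht ht2
    rw [← eqRHS_eq θ p q f h ht]
    exact hs _ ((piC_mem_cap θ ht).2 ht2.le)
  have huniq := hdet1.unique (HasDerivAt.congr_of_eventuallyEq dR heq)
  simp only [hx00, hdet2, hprod, eqRHS_eq θ p q f h hx0, Pi.mul_apply] at huniq
  set e := ((n : ℝ) + 1 - q) / 2 with he
  rw [Real.rpow_sub_one hhp.ne' (p - 1), Real.rpow_sub_one hG2.ne' e] at huniq
  have hA : 0 < h (piC n θ x) ^ (p - 1) := Real.rpow_pos_of_pos hhp _
  have hB : 0 < (‖Gx n θ h x‖ ^ 2) ^ e := Real.rpow_pos_of_pos hG2 _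
  have hsum1 : ∑ i, (lam i)⁻¹ * ⟪M' (b i), b i⟫ =
      ⟪gradient f (piC n θ x), P⟫ / f (piC n θ x) +
        (p - 1) * ⟪gradient h (piC n θ x), P⟫ / h (piC n θ x) +
        (n + 1 - q) * ⟪Tx n θ h x E, Gx n θ h x⟫ / ‖Gx n θ h x‖ ^ 2 := by
    have h2 : ((n : ℝ) + 1 - q) = 2 * e := by rw [he]; ring
    rw [h2]
    have h3 : f (piC n θ x) * h (piC n θ x) ^ (p - 1) * (‖Gx n θ h x‖ ^ 2) ^ e ≠ 0 := by positivity
    apply mul_left_cancel₀ h3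
    rw [huniq, real_inner_comm (Gx n θ h x)]
    field_simp
  -- sum with M'
  have hTb : ∀ i, Tx n θ h x (b i) = lam i • b i - ⟪x, b i⟫ • x := by
    intro i
    rw [← hb i, hessOp_eq' θ hh hx0, hx, hnx]; simp
  have hbb : ∀ i, ⟪b i, b i⟫ = 1 := fun i => by
    rw [real_inner_self_eq_norm_sq, b.orthonormal.1 i]; norm_num
  have hPx : ∑ i, ⟪x, b i⟫ * ⟪P, b i⟫ = 0 := by
    have h4 := b.sum_inner_mul_inner x P
    have h5 : ⟪x, P⟫ = 0 := by
      have := inner_nh_Pj hx0 E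
      rw [hnx] at this
      rw [real_inner_comm]; exact this
    rw [← h5, ← h4]
    refine Finset.sum_congr rfl fun i _ => ?_
    rw [real_inner_comm P (b i)]
  have hxx : ∑ i, ⟪x, b i⟫ * ⟪x, b i⟫ = 1 := by
    have h4 := b.sum_inner_mul_inner x x
    rw [real_inner_self_eq_norm_sq, hx] at h4
    rw [one_pow] at h4
    rw [← h4]
    refine Finset.sum_congr rfl fun i _ => ?_
    rw [real_inner_comm x (b i)]
  have hterm : ∀ i, (lam i)⁻¹ * ⟪M' (b i), b i⟫ = (lam i)⁻¹ * ⟪Dx n θ h x E (b i), b i⟫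
      + ⟪x, E⟫ * (1 - ⟪x, b i⟫ * ⟪x, b i⟫) + 2 * (⟪x, b i⟫ * ⟪P, b i⟫) := by
    intro i
    have h6 : ⟪M' (b i), b i⟫ = ⟪x, E⟫ * (lam i - ⟪x, b i⟫ * ⟪x, b i⟫) + ⟪Dx n θ h x E (b i), b i⟫
        + 2 * (⟪x, b i⟫ * ⟪P, b i⟫) := by
      simp only [hM', add_apply, smul_apply, ContinuousLinearMap.smulRight_apply, innerSL_apply_apply, inner_add_left, real_inner_smul_left,
        hTb, inner_sub_left, hbb]
      ring
    rw [h6]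
    have h7 := hxb' i
    have h8 : (lam i)⁻¹ * lam i = 1 := inv_mul_cancel₀ (hl i).ne'
    linear_combination ⟪x, E⟫ * h8 - ⟪x, E⟫ * ⟪x, b i⟫ * h7 + 2 * ⟪P, b i⟫ * h7
  rw [← hsum1]
  simp_rw [hterm]
  rw [Finset.sum_add_distrib, Finset.sum_add_distrib, ← Finset.mul_sum, ← Finset.mul_sum,
    Finset.sum_sub_distrib, hPx, hxx, real_inner_comm x E]
  simp
  ring
end

section

/-- gradient of the vertical component of `Gx` -/
theorem hasGradientAt_v {n : ℕ} (θ : ℝ) {h : Euc n → ℝ} (hh : ContDiff ℝ (⊤ : ℕ∞) h)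
    {x : Euc n} (hx : x ≠ 0) :
    HasGradientAt (fun y => ⟪eTop n, Gx n θ h y⟫) (Tx n θ h x (eTop n)) x := by
  rw [hasGradientAt_iff_hasFDerivAt]
  have := (hasFDerivAt_const (eTop n) x).inner ℝ (hasFDerivAt_Gx' θ hh hx)
  refine HasFDerivAt.congr_fderiv this ?_
  ext1 w
  simp only [InnerProductSpace.toDual_apply_apply]
  rw [Tx_symm θ hh hx]
  simp

/-- barrier function -/
def Phi (n : ℕ) (θ : ℝ) (h : Euc n → ℝ) (a N σ : ℝ) (y : Euc n) : ℝ :=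
  a * ((⟪eTop n, nh y⟫ - cos θ) - N * (⟪eTop n, nh y⟫ - cos θ) ^ 2) + σ * ⟪eTop n, Gx n θ h y⟫

def gPhi (n : ℕ) (θ : ℝ) (h : Euc n → ℝ) (a N σ : ℝ) (y : Euc n) : Euc n :=
  (a * (1 - 2 * N * (⟪eTop n, nh y⟫ - cos θ))) • gs y + σ • Tx n θ h y (eTop n)

theorem hasGradientAt_Phi {n : ℕ} (θ : ℝ) {h : Euc n → ℝ} (hh : ContDiff ℝ (⊤ : ℕ∞) h)
    (a N σ : ℝ) {x : Euc n} (hx : x ≠ 0) :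
    HasGradientAt (Phi n θ h a N σ) (gPhi n θ h a N σ x) x := by
  rw [hasGradientAt_iff_hasFDerivAt]
  have h1 := ((hasGradientAt_S hx).hasFDerivAt).sub_const (cos θ)
  have h2 := (((h1.sub ((h1.pow 2).const_mul N)).const_mul a)).add
    ((hasGradientAt_v θ hh hx).hasFDerivAt.const_mul σ)
  refine HasFDerivAt.congr_fderiv h2 ?_
  ext1 w
  simp [gPhi, real_inner_smul_left]
  ring

theorem hasFDerivAt_gPhi {n : ℕ} (θ : ℝ) {h : Euc n → ℝ} (hh : ContDiff ℝ (⊤ : ℕ∞) h)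
    (a N σ : ℝ) {x : Euc n} (hx : ‖x‖ = 1) :
    ∃ B : Euc n →L[ℝ] Euc n, HasFDerivAt (gPhi n θ h a N σ) B x ∧ ∀ w, ⟪B w, w⟫ =
      - 2 * a * N * ⟪Pj x (eTop n), w⟫ ^ 2 + a * (1 - 2 * N * (⟪eTop n, x⟫ - cos θ)) *
      (- 2 * ⟪x, w⟫ * ⟪Pj x (eTop n), w⟫ - ⟪eTop n, x⟫ * (⟪w, w⟫ - ⟪x, w⟫ ^ 2))
      + σ * ⟪Dx n θ h x (eTop n) w, w⟫ := by
  have hx0 : x ≠ 0 := by intro h; simp [h] at hx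
  obtain ⟨B0, hB0, hB⟩ := hasFDerivAt_gs hx
  have h1 := (hasGradientAt_S hx0).hasFDerivAt.sub_const (cos θ)
  have h2 := (((h1.const_mul (2 * N)).const_sub 1).const_mul a).smul hB0
  have h3 := h2.add ((hasFDerivAt_Tx_apply θ hh hx0 (eTop n)).const_smul σ)
  refine ⟨_, h3, fun w => ?_⟩
  have hg : gs x = Pj x (eTop n) := by simp [gs, hx]
  have hD := Dx_symm θ hh hx0 w (eTop n)
  rw [← hg] at hB ⊢
  simp [inner_add_left, real_inner_smul_left, hB, hD, nh_unit hx]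
  ring

set_option maxHeartbeats 2000000 in
theorem barrier_point {n : ℕ} {θ p q : ℝ} {f h : Euc n → ℝ}
    (hf : ContDiff ℝ (⊤ : ℕ∞) f) (hfpos : ∀ ξ ∈ cap n θ, 0 < f ξ)
    (hh : ContDiff ℝ (⊤ : ℕ∞) h) (hpos : PosOnCap n θ h) (hc : IsConvexSol n θ h)
    (hs : SolvesEq n θ p q f h) {x : Euc n} (hx : ‖x‖ = 1) (hcap : cos θ < ⟪eTop n, x⟫)
    (hcos : 0 < cos θ) {a N σ K₁ m₁ m₂ KG : ℝ} (ha : 1 ≤ a) (hN : 0 ≤ N) (hσ : |σ| = 1)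
    (hm₁ : 0 < m₁) (hm₂ : 0 < m₂)
    (hb : 1 / 2 ≤ 1 - 2 * N * (⟪eTop n, x⟫ - cos θ))
    (hfm : m₁ ≤ f (piC n θ x)) (hhm : m₂ ≤ h (piC n θ x))
    (hfK : ‖sgrad n θ f (piC n θ x)‖ ≤ K₁) (hG : ‖Gx n θ h x‖ ≤ KG)
    (hmin : IsLocalMin (Phi n θ h a N σ) x) :
    1 + (4 * N / cos θ) * (1 - ⟪eTop n, x⟫ ^ 2) ≤
      ((2 / cos θ) * (1 + (n + K₁ / m₁ + |p - 1| * KG / m₂) + |(n : ℝ) + 1 - q| / m₂)) ^ (n + 1)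
        * eqRHS n θ p q f h (piC n θ x) := by
  have hx0 : x ≠ 0 := by intro h; simp [h] at hx
  have hnx : nh x = x := nh_unit hx
  obtain ⟨b, lam, hl, hprod, hxb, hsum⟩ := linearized hf hfpos hh hpos hc hs hx hcap
  obtain ⟨B, hB, hBw⟩ := hasFDerivAt_gPhi θ hh a N σ hx
  obtain ⟨hg0, hBpos⟩ := aux_second_test _ _ B x
    (by filter_upwards [eventually_ne_zero hx0] with y hy using hasGradientAt_Phi θ hh a N σ hy) hB hmin
  set E := eTop n with hE
  set τ := Pj x E with hτ
  set s := ⟪E, x⟫ with hsdef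
  set b' := 1 - 2 * N * (s - cos θ) with hb'
  have hs1 : s ≤ 1 := by
    have := real_inner_le_norm E x
    rw [hx, hE, eTop_norm] at this
    simpa using this
  have hb1 : b' ≤ 1 := by
    have : 0 ≤ 2 * N * (s - cos θ) := by
      apply mul_nonneg (by positivity); linarith
    linarith
  have hττ : ⟪τ, τ⟫ = 1 - s ^ 2 := by
    rw [hτ, Pj_apply, hnx]
    simp only [inner_sub_left, inner_sub_right, real_inner_smul_left, real_inner_smul_right]
    rw [hE, eTop_inner, real_inner_self_eq_norm_sq, hx, real_inner_comm (eTop n) x, ← hE, ← hsdef]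
    ring
  have hτn : ‖τ‖ ≤ 1 := by
    rw [real_inner_self_eq_norm_sq] at hττ
    nlinarith [norm_nonneg τ, sq_nonneg s]
  -- norm of Tx E
  have hTE : ‖Tx n θ h x E‖ ≤ a := by
    have h1 : σ • Tx n θ h x E = -((a * b') • τ) := by
      have h2 := hg0
      simp only [gPhi, gs, hx, inv_one, one_smul, hnx] at h2
      rw [add_comm] at h2
      exact eq_neg_of_add_eq_zero_left h2
    have h3 : ‖σ • Tx n θ h x E‖ = ‖Tx n θ h x E‖ := by
      rw [norm_smul, Real.norm_eq_abs, hσ, one_mul]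
    rw [← h3, h1, norm_neg, norm_smul, Real.norm_eq_abs, abs_of_nonneg (mul_nonneg (by linarith) (by linarith))]
    have : a * b' ≤ a := mul_le_of_le_one_right (by linarith) hb1
    calc a * b' * ‖τ‖ ≤ a * b' * 1 := by gcongr
      _ ≤ a := by linarith
  -- bound on L
  have hGm : m₂ ≤ ‖Gx n θ h x‖ := by
    have h1 := Gx_inner_nh θ h hx0
    have h2 := real_inner_le_norm (Gx n θ h x) (nh x)
    rw [h1, norm_nh hx0, mul_one] at h2
    exact hhm.trans h2
  have hGpos : 0 < ‖Gx n θ h x‖ := hm₂.trans_le hGm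
  have hE1 : ‖E‖ = 1 := eTop_norm n
  have L1 : |⟪gradient f (piC n θ x), τ⟫ / f (piC n θ x)| ≤ K₁ / m₁ := by
    rw [hτ, ← inner_Pj, ← sgrad_eq θ, abs_div, abs_of_pos (hm₁.trans_le hfm)]
    have h1 := abs_real_inner_le_norm (sgrad n θ f (piC n θ x)) E
    rw [hE1, mul_one] at h1
    exact div_le_div₀ ((norm_nonneg _).trans hfK) (h1.trans hfK) hm₁ hfm
  have hsg : ‖sgrad n θ h (piC n θ x)‖ ≤ KG := by
    have h1 := Gx_normsq θ h hx0
    have h2 : ‖sgrad n θ h (piC n θ x)‖ ≤ ‖Gx n θ h x‖ := by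
      refine (sq_le_sq₀ (norm_nonneg _) hGpos.le).1 ?_
      have := sq_nonneg (h (piC n θ x))
      linarith
    exact h2.trans hG
  have L2 : |(p - 1) * ⟪gradient h (piC n θ x), τ⟫ / h (piC n θ x)| ≤ |p - 1| * KG / m₂ := by
    rw [hτ, ← inner_Pj, ← sgrad_eq θ, abs_div, abs_of_pos (hm₂.trans_le hhm), abs_mul]
    have h1 := abs_real_inner_le_norm (sgrad n θ h (piC n θ x)) E
    rw [hE1, mul_one] at h1
    have hK : 0 ≤ KG := (norm_nonneg _).trans hG
    exact div_le_div₀ (by positivity) (by gcongr; exact h1.trans hsg) hm₂ hhm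
  have L3 : |((n : ℝ) + 1 - q) * ⟪Tx n θ h x E, Gx n θ h x⟫ / ‖Gx n θ h x‖ ^ 2|
      ≤ a * (|(n : ℝ) + 1 - q| / m₂) := by
    rw [abs_div, abs_mul, abs_of_pos (a := ‖Gx n θ h x‖ ^ 2) (by positivity)]
    have h1 := abs_real_inner_le_norm (Tx n θ h x E) (Gx n θ h x)
    have h2 : |⟪Tx n θ h x E, Gx n θ h x⟫| ≤ a * ‖Gx n θ h x‖ := h1.trans (by gcongr)
    calc _ ≤ |(n : ℝ) + 1 - q| * (a * ‖Gx n θ h x‖) / ‖Gx n θ h x‖ ^ 2 := by gcongr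
      _ = a * (|(n : ℝ) + 1 - q| / ‖Gx n θ h x‖) := by field_simp
      _ ≤ _ := by gcongr
  set ℓ1 := ⟪gradient f (piC n θ x), τ⟫ / f (piC n θ x)
  set ℓ2 := (p - 1) * ⟪gradient h (piC n θ x), τ⟫ / h (piC n θ x)
  set ℓ3 := ((n : ℝ) + 1 - q) * ⟪Tx n θ h x E, Gx n θ h x⟫ / ‖Gx n θ h x‖ ^ 2
  set A1 := K₁ / m₁
  set A2 := |p - 1| * KG / m₂
  set A3 := |(n : ℝ) + 1 - q| / m₂
  have hA1 : 0 ≤ A1 := (abs_nonneg _).trans L1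
  have hA2 : 0 ≤ A2 := (abs_nonneg _).trans L2
  have hA3 : 0 ≤ A3 := by positivity
  have hnn : (0:ℝ) ≤ n := by positivity
  have hJ : σ * (ℓ1 + ℓ2 + ℓ3 - n * s) ≤ n + A1 + A2 + a * A3 := by
    have h0 : |s| ≤ 1 := by rw [abs_le]; constructor <;> linarith
    calc σ * (ℓ1 + ℓ2 + ℓ3 - n * s) ≤ |σ * (ℓ1 + ℓ2 + ℓ3 - n * s)| := le_abs_self _
      _ = |ℓ1 + ℓ2 + ℓ3 - n * s| := by rw [abs_mul, hσ, one_mul]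
      _ ≤ |ℓ1 + ℓ2 + ℓ3| + |n * s| := abs_sub _ _
      _ ≤ |ℓ1| + |ℓ2| + |ℓ3| + n * |s| := by
        rw [abs_mul, abs_of_nonneg hnn]
        gcongr
        exact abs_add_three _ _ _
      _ ≤ _ := by
        have h6 : (n : ℝ) * |s| ≤ n := mul_le_of_le_one_right hnn h0
        linarith
  -- the sums
  have hbb : ∀ i, ⟪b i, b i⟫ = 1 := fun i => by
    rw [real_inner_self_eq_norm_sq, b.orthonormal.1 i]; norm_num
  have hPx : ∑ i, ⟪x, b i⟫ * ⟪τ, b i⟫ = 0 := by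
    have h4 := b.sum_inner_mul_inner x τ
    have h5 : ⟪x, τ⟫ = 0 := by
      have := inner_nh_Pj hx0 E
      rw [hnx] at this
      rw [real_inner_comm]; exact this
    rw [← h5, ← h4]
    refine Finset.sum_congr rfl fun i _ => ?_
    rw [real_inner_comm τ (b i)]
  have hsq : ∀ u : Euc n, ∑ i, ⟪u, b i⟫ ^ 2 = ⟪u, u⟫ := by
    intro u
    rw [← b.sum_inner_mul_inner u u]
    refine Finset.sum_congr rfl fun i _ => ?_
    rw [real_inner_comm u (b i)]; ring
  set Z := ∑ i, (lam i)⁻¹ with hZ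
  set Q := ∑ i, (lam i)⁻¹ * ⟪τ, b i⟫ ^ 2 with hQ
  have hterm : ∀ i, (lam i)⁻¹ * ⟪B (b i), b i⟫ = (-2 * a * N) * ((lam i)⁻¹ * ⟪τ, b i⟫ ^ 2)
      + (-2 * a * b') * (⟪x, b i⟫ * ⟪τ, b i⟫) + (- a * b' * s) * (lam i)⁻¹
      + (a * b' * s) * ⟪x, b i⟫ ^ 2 + σ * ((lam i)⁻¹ * ⟪Dx n θ h x E (b i), b i⟫) := by
    intro i
    rw [hBw, hbb]
    have := hxb i
    linear_combination (-2 * a * b' * ⟪τ, b i⟫ + a * b' * s * ⟪x, b i⟫) * this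
  have hge : 0 ≤ ∑ i, (lam i)⁻¹ * ⟪B (b i), b i⟫ :=
    Finset.sum_nonneg fun i _ => mul_nonneg (inv_nonneg.2 (hl i).le) (hBpos _)
  simp_rw [hterm] at hge
  simp only [Finset.sum_add_distrib, ← Finset.mul_sum] at hge
  rw [hPx, hsum, hsq, real_inner_self_eq_norm_sq, hx] at hge
  have hZ0 : 0 ≤ Z := Finset.sum_nonneg fun i _ => inv_nonneg.2 (hl i).le
  have hQ0 : 0 ≤ Q := Finset.sum_nonneg fun i _ => mul_nonneg (inv_nonneg.2 (hl i).le) (sq_nonneg _)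
  have hfin : 2 * N * Q + b' * s * Z ≤ b' * s + (n + A1 + A2) + A3 := by
    have h1 : a * (2 * N * Q + b' * s * Z) ≤ a * (b' * s) + (n + A1 + A2 + a * A3) := by
      linarith
    have h2 : n + A1 + A2 ≤ a * (n + A1 + A2) :=
      le_mul_of_one_le_left (by positivity) ha
    have h3 : a * (2 * N * Q + b' * s * Z) ≤ a * (b' * s + (n + A1 + A2) + A3) := by linarith
    exact le_of_mul_le_mul_left h3 (by linarith)
  have hbs : cos θ / 2 ≤ b' * s := by
    have h1 : 1 / 2 * cos θ ≤ b' * s :=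
      mul_le_mul hb hcap.le hcos.le (by linarith)
    linarith
  have hbs1 : b' * s ≤ 1 := mul_le_one₀ hb1 (by linarith) hs1
  have hD : ∑ i, (lam i)⁻¹ * (1 + (4 * N / cos θ) * ⟪τ, b i⟫ ^ 2) ≤
      (2 / cos θ) * (1 + (n + A1 + A2) + A3) := by
    have h1 : ∑ i, (lam i)⁻¹ * (1 + (4 * N / cos θ) * ⟪τ, b i⟫ ^ 2) = Z + (4 * N / cos θ) * Q := by
      rw [hZ, hQ, Finset.mul_sum, ← Finset.sum_add_distrib]
      refine Finset.sum_congr rfl fun i _ => ?_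
      ring
    rw [h1]
    have h2 : Z + (4 * N / cos θ) * Q = (2 / cos θ) * (2 * N * Q + cos θ / 2 * Z) := by
      field_simp; ring
    rw [h2]
    have h3 : cos θ / 2 * Z ≤ b' * s * Z := by gcongr
    exact mul_le_mul_of_nonneg_left (by linarith) (by positivity)
  have := aux_prod lam (fun i => ⟪τ, b i⟫) hl (4 * N / cos θ) _ (by positivity) hD
  rwa [hsq, hττ, hprod] at this
end

section

theorem unit_ne {n : ℕ} {x : Euc n} (hx : ‖x‖ = 1) : x ≠ 0 := by intro h; simp [h] at hx

theorem conormal_eq {n : ℕ} {θ : ℝ} (hsin : 0 < sin θ) {x : Euc n} (hx : ‖x‖ = 1) :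
    conormal n θ (piC n θ x) = (sin θ)⁻¹ • (cos θ • x - eTop n) := by
  rw [conormal, piC, nh_unit hx, eVec_eq, Real.cot_eq_cos_div_sin]
  have h1 : sin θ = (sin θ)⁻¹ * (1 - cos θ ^ 2) := by
    have := Real.sin_sq_add_cos_sq θ
    field_simp; linarith
  have h2 : sin θ • -eTop n = ((sin θ)⁻¹ * (1 - cos θ ^ 2)) • -eTop n := by rw [← h1]
  rw [h2]
  module

theorem piC_bdry {n : ℕ} (θ : ℝ) {x : Euc n} (hx : ‖x‖ = 1) (hb : ⟪eTop n, x⟫ = cos θ) :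
    piC n θ x ∈ capBdry n θ := by
  refine ⟨?_, ?_⟩
  · rw [← inner_eTop, piC, nh_unit hx, eVec_eq, inner_add_right, inner_smul_right,
      inner_neg_right, eTop_inner, hb]
    ring
  · rw [sphNormal_piC, nh_unit hx, hx]

theorem bdry_v {n : ℕ} {θ : ℝ} {h : Euc n → ℝ} (hsin : 0 < sin θ) (hR : RobinBC n θ h)
    {x : Euc n} (hx : ‖x‖ = 1) (hb : ⟪eTop n, x⟫ = cos θ) : ⟪eTop n, Gx n θ h x⟫ = 0 := by
  have h1 := hR _ (piC_bdry θ hx hb)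
  have h2 := inner_nh_Pj (unit_ne hx) (gradient h (piC n θ x))
  rw [← sgrad_eq, nh_unit hx] at h2
  rw [conormal_eq hsin hx, real_inner_smul_right, inner_sub_right, real_inner_smul_right, h2,
    Real.cot_eq_cos_div_sin] at h1
  rw [Gx_eq, inner_add_right, real_inner_smul_right, nh_unit hx, hb, real_inner_comm]
  field_simp at h1
  linarith

theorem support_ineq {n : ℕ} {θ : ℝ} {h : Euc n → ℝ} (hh : ContDiff ℝ (⊤ : ℕ∞) h)
    (hcos : 0 < cos θ) (hc : IsConvexSol n θ h) {x z : Euc n} (hx : ‖x‖ = 1) (hz : ‖z‖ = 1)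
    (hxc : cos θ ≤ ⟪eTop n, x⟫) (hzc : cos θ ≤ ⟪eTop n, z⟫) :
    ⟪Gx n θ h x, z⟫ ≤ h (piC n θ z) := by
  have hE : ∀ t ∈ Icc (0:ℝ) 1, cos θ ≤ ⟪eTop n, x + t • (z - x)⟫ := by
    intro t ht
    rw [inner_add_right, real_inner_smul_right, inner_sub_right]
    nlinarith [ht.1, ht.2]
  have hn0 : ∀ t ∈ Icc (0:ℝ) 1, x + t • (z - x) ≠ 0 := by
    intro t ht h0
    have := hE t ht
    rw [h0, inner_zero_right] at this
    linarith
  have hn1 : ∀ t ∈ Icc (0:ℝ) 1, ‖x + t • (z - x)‖ ≤ 1 := by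
    intro t ht
    have : x + t • (z - x) = (1 - t) • x + t • z := by module
    rw [this]
    refine (norm_add_le _ _).trans ?_
    rw [norm_smul, norm_smul, hx, hz, Real.norm_eq_abs, Real.norm_eq_abs, abs_of_nonneg ht.1,
      abs_of_nonneg (by linarith [ht.2])]
    linarith
  have hd : ∀ t ∈ Icc (0:ℝ) 1, HasDerivAt (fun s : ℝ => Hx n θ h (x + s • (z - x)))
      ⟪Gx n θ h (x + t • (z - x)), z - x⟫ t := fun t ht =>
    aux_grad_chain (hasGradientAt_Hx θ hh (hn0 t ht)) (aux_line x (z - x) t)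
  have hd2 : ∀ t ∈ Icc (0:ℝ) 1, HasDerivAt (fun s : ℝ => ⟪Gx n θ h (x + s • (z - x)), z - x⟫)
      ⟪Tx n θ h (x + t • (z - x)) (z - x), z - x⟫ t := by
    intro t ht
    have h1 := (hasFDerivAt_Gx' θ hh (hn0 t ht)).comp_hasDerivAt t (aux_line x (z - x) t)
    have h2 := h1.inner ℝ (hasDerivAt_const t (z - x))
    simpa using h2
  have hnn : ∀ t ∈ Icc (0:ℝ) 1, 0 ≤ ⟪Tx n θ h (x + t • (z - x)) (z - x), z - x⟫ := by
    intro t ht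
    have h0 := hn0 t ht
    rw [Tx_eq θ hh h0, smul_apply, real_inner_smul_left]
    refine mul_nonneg (by positivity) (T0_nonneg hc h0 ?_ _).1
    rw [nh, real_inner_smul_right]
    have h3 : 0 < ‖x + t • (z - x)‖ := norm_pos_iff.2 h0
    rw [← div_eq_inv_mul, le_div_iff₀ h3]
    have := hE t ht
    have := hn1 t ht
    nlinarith
  have hmono : MonotoneOn (fun s : ℝ => ⟪Gx n θ h (x + s • (z - x)), z - x⟫) (Icc 0 1) := by
    apply monotoneOn_of_deriv_nonneg (convex_Icc 0 1)
    · exact fun t ht => (hd2 t ht).continuousAt.continuousWithinAt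
    · rw [interior_Icc]
      exact fun t ht => (hd2 t (Ioo_subset_Icc_self ht)).differentiableAt.differentiableWithinAt
    · rw [interior_Icc]
      intro t ht
      rw [(hd2 t (Ioo_subset_Icc_self ht)).deriv]
      exact hnn t (Ioo_subset_Icc_self ht)
  obtain ⟨c, hcI, hcd⟩ := exists_hasDerivAt_eq_slope (fun s : ℝ => Hx n θ h (x + s • (z - x)))
    (fun t => ⟪Gx n θ h (x + t • (z - x)), z - x⟫) (zero_lt_one)
    (fun t ht => (hd t ht).continuousAt.continuousWithinAt)
    (fun t ht => hd t (Ioo_subset_Icc_self ht))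
  have hm := hmono (left_mem_Icc.2 zero_le_one) (Ioo_subset_Icc_self hcI) hcI.1.le
  simp only [zero_smul, add_zero] at hm
  rw [hcd] at hm
  simp only [zero_smul, add_zero, one_smul, sub_zero, div_one, add_sub_cancel, Hx, hx, hz] at hm
  have h5 := Gx_inner_nh θ h (unit_ne hx)
  rw [nh_unit hx] at h5
  rw [inner_sub_right] at hm
  linarith

theorem bdry_G {n : ℕ} {θ : ℝ} {h : Euc n → ℝ} (hh : ContDiff ℝ (⊤ : ℕ∞) h) (hsin : 0 < sin θ)
    (hcos : 0 < cos θ) (hc : IsConvexSol n θ h) (hR : RobinBC n θ h) {K₂ : ℝ}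
    (hK : CZeroNormLe n θ h K₂)
    {x : Euc n} (hx : ‖x‖ = 1) (hb : ⟪eTop n, x⟫ = cos θ) : ‖Gx n θ h x‖ ≤ K₂ / sin θ := by
  have hv := bdry_v hsin hR hx hb
  set G := Gx n θ h x with hG
  have hK0 : 0 ≤ K₂ := (abs_nonneg _).trans (hK _ ((piC_mem_cap θ (unit_ne hx)).2
    (by rw [nh_unit hx, hb])))
  by_cases h0 : G = 0
  · rw [h0, norm_zero]; positivity
  have hgp : 0 < ‖G‖ := norm_pos_iff.2 h0
  set z : Euc n := (sin θ * ‖G‖⁻¹) • G + cos θ • eTop n with hz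
  have hvc : ⟪G, eTop n⟫ = 0 := by rw [real_inner_comm]; exact hv
  have hzz : ‖z‖ = 1 := by
    have : ‖z‖ ^ 2 = 1 := by
      rw [hz, norm_add_sq_real, real_inner_smul_left, real_inner_smul_right, hvc, norm_smul,
        norm_smul, eTop_norm, norm_mul, norm_inv, norm_norm, Real.norm_eq_abs, Real.norm_eq_abs,
        mul_assoc, inv_mul_cancel₀ hgp.ne', mul_one, mul_one, sq_abs, sq_abs]
      have := Real.sin_sq_add_cos_sq θ
      linarith
    have h1 := norm_nonneg z
    nlinarith
  have hzc : ⟪eTop n, z⟫ = cos θ := by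
    rw [hz, inner_add_right, real_inner_smul_right, real_inner_smul_right, hv, eTop_inner]; ring
  have h1 := support_ineq hh hcos hc hx hzz hb.ge hzc.ge
  have h2 : ⟪G, z⟫ = sin θ * ‖G‖ := by
    rw [hz, inner_add_right, real_inner_smul_right, real_inner_smul_right, hvc,
      real_inner_self_eq_norm_sq]
    field_simp
    ring
  have h3 := hK _ ((piC_mem_cap θ (unit_ne hzz)).2 (by rw [nh_unit hzz, hzc]))
  rw [← hG, h2] at h1
  rw [le_div_iff₀ hsin]
  have := le_abs_self (h (piC n θ z))
  linarith

theorem compact_strip (n : ℕ) (c d : ℝ) :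
    IsCompact {x : Euc n | ‖x‖ = 1 ∧ c ≤ ⟪eTop n, x⟫ ∧ ⟪eTop n, x⟫ ≤ d} := by
  have h1 : IsCompact (Metric.sphere (0 : Euc n) 1) := isCompact_sphere _ _
  have h2 : IsClosed {x : Euc n | c ≤ ⟪eTop n, x⟫ ∧ ⟪eTop n, x⟫ ≤ d} := by
    have hcont : Continuous fun x : Euc n => ⟪eTop n, x⟫ := by fun_prop
    exact IsClosed.inter (isClosed_le continuous_const hcont) (isClosed_le hcont continuous_const)
  have := h1.inter_right h2
  convert this using 1
  ext x
  simp

/-- interior minimum on the strip gives local minimum in the ambient space -/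
theorem local_min_of_strip {n : ℕ} {c d : ℝ} {F : Euc n → ℝ}
    (hF : ∀ y : Euc n, y ≠ 0 → F (nh y) = F y) {x : Euc n} (hx : ‖x‖ = 1) (h1 : c < ⟪eTop n, x⟫)
    (h2 : ⟪eTop n, x⟫ < d)
    (hmin : ∀ y : Euc n, ‖y‖ = 1 → c ≤ ⟪eTop n, y⟫ → ⟪eTop n, y⟫ ≤ d → F x ≤ F y) :
    IsLocalMin F x := by
  have hx0 := unit_ne hx
  have hcont : ContinuousAt (fun y : Euc n => ⟪eTop n, nh y⟫) x :=
    (hasGradientAt_S hx0).hasFDerivAt.continuousAt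
  have e1 : ∀ᶠ y in nhds x, c < ⟪eTop n, nh y⟫ :=
    hcont.eventually (lt_mem_nhds (by simpa [nh_unit hx] using h1))
  have e2 : ∀ᶠ y in nhds x, ⟪eTop n, nh y⟫ < d :=
    hcont.eventually (gt_mem_nhds (by simpa [nh_unit hx] using h2))
  filter_upwards [e1, e2, eventually_ne_zero hx0] with y y1 y2 y0
  rw [← hF y y0]
  exact hmin _ (norm_nh y0) y1.le y2.le

theorem inner_le_one {n : ℕ} {x : Euc n} (hx : ‖x‖ = 1) : ⟪eTop n, x⟫ ≤ 1 := by
  have := real_inner_le_norm (eTop n) x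
  rw [hx, eTop_norm] at this
  simpa using this

theorem global_G {n : ℕ} {θ : ℝ} {h : Euc n → ℝ} (hh : ContDiff ℝ (⊤ : ℕ∞) h) (hsin : 0 < sin θ)
    (hcos : 0 < cos θ) (hc : IsConvexSol n θ h) (hR : RobinBC n θ h) {K₂ : ℝ}
    (hK : CZeroNormLe n θ h K₂)
    {x : Euc n} (hx : ‖x‖ = 1) (hb : cos θ ≤ ⟪eTop n, x⟫) : ‖Gx n θ h x‖ ≤ K₂ / sin θ := by
  obtain ⟨y, ⟨hy1, hy2, hy3⟩, hymax⟩ := (compact_strip n (cos θ) 2).exists_isMaxOn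
    (f := fun x => ‖Gx n θ h x‖) ⟨x, hx, hb, by linarith [inner_le_one hx]⟩
    (fun y hy => ((hasFDerivAt_Gx' θ hh (unit_ne hy.1)).continuousAt.norm).continuousWithinAt)
  have hyx : ‖Gx n θ h x‖ ≤ ‖Gx n θ h y‖ := hymax ⟨hx, hb, by linarith [inner_le_one hx]⟩
  refine hyx.trans ?_
  rcases hy2.eq_or_lt with heq | hlt
  · exact bdry_G hh hsin hcos hc hR hK hy1 heq.symm
  have hy0 := unit_ne hy1
  have hlm : IsLocalMin (fun z => - ‖Gx n θ h z‖ ^ 2) y := by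
    apply local_min_of_strip (c := cos θ) (d := 2)
      (fun z hz => by rw [Gx_homog θ h hz]) hy1 hlt (by linarith [inner_le_one hy1])
    intro z z1 z2 z3
    have : ‖Gx n θ h z‖ ≤ ‖Gx n θ h y‖ := hymax ⟨z1, z2, z3⟩
    have h0 := norm_nonneg (Gx n θ h z)
    have := pow_le_pow_left₀ h0 this 2
    linarith
  have hfd := ((hasFDerivAt_Gx' θ hh hy0).norm_sq).neg
  have hz := hlm.hasFDerivAt_eq_zero hfd
  have hz2 := congrArg (fun L => L (Gx n θ h y)) hz
  simp at hz2
  have hcap : cos θ ≤ ⟪eTop n, nh y⟫ := by rw [nh_unit hy1]; exact hy2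
  have hP : Pj y (Gx n θ h y) = 0 := by
    by_contra hne
    have := (T0_nonneg hc hy0 hcap (Gx n θ h y)).2 hne
    rw [Tx_eq θ hh hy0, hy1, inv_one, one_smul, real_inner_comm] at hz2
    linarith
  have hGe : Gx n θ h y = h (piC n θ y) • nh y := by
    rw [Pj_apply, real_inner_comm, Gx_inner_nh θ h hy0] at hP
    exact sub_eq_zero.1 hP
  have hKy := hK _ ((piC_mem_cap θ hy0).2 hcap)
  have hs1 := Real.sin_le_one θ
  have hK0 : 0 ≤ K₂ := (abs_nonneg _).trans hKy
  rw [hGe, norm_smul, norm_nh hy0, mul_one, Real.norm_eq_abs]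
  refine hKy.trans ?_
  rw [le_div_iff₀ hsin]
  nlinarith
end

section

theorem Phi_homog {n : ℕ} (θ : ℝ) (h : Euc n → ℝ) (a N σ : ℝ) {y : Euc n} (hy : y ≠ 0) :
    Phi n θ h a N σ (nh y) = Phi n θ h a N σ y := by
  rw [Phi, Phi, Gx_homog θ h hy, nh_unit (norm_nh hy)]

theorem strip_nonneg {n : ℕ} {θ p q : ℝ} {f h : Euc n → ℝ}
    (hf : ContDiff ℝ (⊤ : ℕ∞) f) (hfpos : ∀ ξ ∈ cap n θ, 0 < f ξ)
    (hh : ContDiff ℝ (⊤ : ℕ∞) h) (hpos : PosOnCap n θ h) (hc : IsConvexSol n θ h)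
    (hs : SolvesEq n θ p q f h) (hR : RobinBC n θ h) (hsin : 0 < sin θ)
    (hcos : 0 < cos θ) {a N σ K₁ m₁ m₂ KG δ gm D : ℝ} (ha : 1 ≤ a) (hN : 0 ≤ N) (hσ : |σ| = 1)
    (hm₁ : 0 < m₁) (hm₂ : 0 < m₂) (hδ : 0 < δ) (hNδ : 4 * N * δ ≤ 1) (hδ1 : δ ≤ (1 - cos θ) / 2)
    (haδ : 2 * KG ≤ a * δ)
    (hfm : ∀ ξ ∈ cap n θ, m₁ ≤ f ξ) (hhm : ∀ ξ ∈ cap n θ, m₂ ≤ h ξ)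
    (hfK : ∀ ξ ∈ cap n θ, ‖sgrad n θ f ξ‖ ≤ K₁)
    (hG : ∀ x : Euc n, ‖x‖ = 1 → cos θ ≤ ⟪eTop n, x⟫ → ‖Gx n θ h x‖ ≤ KG)
    (hgm : ∀ x : Euc n, ‖x‖ = 1 → cos θ ≤ ⟪eTop n, x⟫ → eqRHS n θ p q f h (piC n θ x) ≤ gm)
    (hDeq : D = (2 / cos θ) * (1 + (n + K₁ / m₁ + |p - 1| * KG / m₂) + |(n : ℝ) + 1 - q| / m₂))
    (hD0 : 0 ≤ D)
    (hbig : D ^ (n + 1) * gm < 1 + (4 * N / cos θ) * (1 - ((1 + cos θ) / 2) ^ 2))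
    {x : Euc n} (hx : ‖x‖ = 1) (hx1 : cos θ ≤ ⟪eTop n, x⟫) (hx2 : ⟪eTop n, x⟫ ≤ cos θ + δ) :
    0 ≤ Phi n θ h a N σ x := by
  obtain ⟨y, ⟨hy1, hy2, hy3⟩, hymin⟩ := (compact_strip n (cos θ) (cos θ + δ)).exists_isMinOn
    (f := Phi n θ h a N σ) ⟨x, hx, hx1, hx2⟩
    (fun y hy => (hasGradientAt_Phi θ hh a N σ (unit_ne hy.1)).hasFDerivAt.continuousAt.continuousWithinAt)
  have hyx : Phi n θ h a N σ y ≤ Phi n θ h a N σ x := hymin ⟨hx, hx1, hx2⟩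
  refine le_trans ?_ hyx
  rcases hy2.eq_or_lt with heq | hlt
  · rw [Phi, nh_unit hy1, bdry_v hsin hR hy1 heq.symm, ← heq]; simp
  rcases hy3.eq_or_lt with heq | hlt3
  · rw [Phi, nh_unit hy1, heq]
    have h1 := abs_real_inner_le_norm (eTop n) (Gx n θ h y)
    rw [eTop_norm, one_mul] at h1
    have h2 : |σ * ⟪eTop n, Gx n θ h y⟫| ≤ KG := by
      rw [abs_mul, hσ, one_mul]; exact h1.trans (hG y hy1 hy2)
    have h3 := (abs_le.1 h2).1
    have h4 : a * δ * (4 * N * δ) ≤ a * δ * 1 :=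
      mul_le_mul_of_nonneg_left hNδ (by positivity)
    have h5 : 0 < a * δ := by positivity
    have h6 : a * ((cos θ + δ - cos θ) - N * (cos θ + δ - cos θ) ^ 2) =
      a * δ - a * δ * (4 * N * δ) / 4 := by ring
    rw [h6]
    linarith
  exfalso
  have hlm : IsLocalMin (Phi n θ h a N σ) y :=
    local_min_of_strip (fun z hz => Phi_homog θ h a N σ hz) hy1 hlt hlt3
      (fun z z1 z2 z3 => hymin ⟨z1, z2, z3⟩)
  have hcap : piC n θ y ∈ cap n θ := (piC_mem_cap θ (unit_ne hy1)).2 (by rw [nh_unit hy1]; exact hy2)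
  have hbp := barrier_point hf hfpos hh hpos hc hs hy1 hlt hcos ha hN hσ hm₁ hm₂
    (by
      have : N * (⟪eTop n, y⟫ - cos θ) ≤ N * δ := mul_le_mul_of_nonneg_left (by linarith) hN
      linarith) (hfm _ hcap) (hhm _ hcap) (hfK _ hcap) (hG y hy1 hy2) hlm
  rw [← hDeq] at hbp
  have h1 : D ^ (n + 1) * eqRHS n θ p q f h (piC n θ y) ≤ D ^ (n + 1) * gm :=
    mul_le_mul_of_nonneg_left (hgm y hy1 hy2) (by positivity)
  have h2 : ⟪eTop n, y⟫ ^ 2 ≤ ((1 + cos θ) / 2) ^ 2 :=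
    pow_le_pow_left₀ (by linarith) (by linarith) 2
  have h3 : (4 * N / cos θ) * (1 - ((1 + cos θ) / 2) ^ 2) ≤ (4 * N / cos θ) * (1 - ⟪eTop n, y⟫ ^ 2) :=
    mul_le_mul_of_nonneg_left (by linarith) (by positivity)
  linarith

theorem bdry_deriv {n : ℕ} {θ : ℝ} {h : Euc n → ℝ}
    (hh : ContDiff ℝ (⊤ : ℕ∞) h) (hR : RobinBC n θ h) (hsin : 0 < sin θ)
    {a N σ δ : ℝ} (hδ : 0 < δ)
    (hst : ∀ x : Euc n, ‖x‖ = 1 → cos θ ≤ ⟪eTop n, x⟫ → ⟪eTop n, x⟫ ≤ cos θ + δ →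
      0 ≤ Phi n θ h a N σ x)
    {x : Euc n} (hx : ‖x‖ = 1) (hb : ⟪eTop n, x⟫ = cos θ) :
    0 ≤ a * sin θ ^ 2 + σ * ⟪Tx n θ h x (eTop n), eTop n⟫ := by
  have hx0 := unit_ne hx
  have hl0 : x + (0:ℝ) • eTop n = x := by simp
  have hPE : ⟪Pj x (eTop n), eTop n⟫ = sin θ ^ 2 := by
    rw [Pj_apply, nh_unit hx, inner_sub_left, real_inner_smul_left, eTop_inner,
      real_inner_comm (eTop n) x, hb]
    have := Real.sin_sq_add_cos_sq θ
    linarith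
  have hsin2 : 0 < sin θ ^ 2 := by positivity
  -- derivative of height along the path
  have d1 : HasDerivAt (fun t : ℝ => ⟪eTop n, nh (x + t • eTop n)⟫) (sin θ ^ 2) 0 := by
    have := aux_grad_chain (t := (0:ℝ)) (c := fun s : ℝ => x + s • eTop n)
      (by rw [hl0]; exact hasGradientAt_S hx0) (aux_line x (eTop n) 0)
    rw [gs, hx, inv_one, one_smul, hPE] at this
    exact this
  have d2 : HasDerivAt (fun t : ℝ => Phi n θ h a N σ (x + t • eTop n))
      ⟪gPhi n θ h a N σ x, eTop n⟫ 0 :=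
    aux_grad_chain (t := (0:ℝ)) (c := fun s : ℝ => x + s • eTop n)
      (by rw [hl0]; exact hasGradientAt_Phi θ hh a N σ hx0) (aux_line x (eTop n) 0)
  have hval : ⟪gPhi n θ h a N σ x, eTop n⟫ =
      a * sin θ ^ 2 + σ * ⟪Tx n θ h x (eTop n), eTop n⟫ := by
    rw [gPhi, inner_add_left, real_inner_smul_left, real_inner_smul_left, gs, hx, inv_one, one_smul,
      hPE, nh_unit hx, hb]
    ring
  rw [← hval]
  have hP0 : Phi n θ h a N σ (x + (0:ℝ) • eTop n) = 0 := by
    rw [hl0, Phi, nh_unit hx, bdry_v hsin hR hx hb, hb]; simp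
  have hS0 : ⟪eTop n, nh (x + (0:ℝ) • eTop n)⟫ = cos θ := by rw [hl0, nh_unit hx, hb]
  have hsub : nhdsWithin (0:ℝ) (Ioi 0) ≤ nhdsWithin (0:ℝ) {0}ᶜ :=
    nhdsWithin_mono 0 (fun t ht => ne_of_gt ht)
  have e1 : ∀ᶠ t in nhdsWithin (0:ℝ) (Ioi 0), cos θ ≤ ⟪eTop n, nh (x + t • eTop n)⟫ := by
    have h1 := (hasDerivAt_iff_tendsto_slope_zero.1 d1)
    have h2 := (h1.mono_left hsub).eventually
      (lt_mem_nhds hsin2)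
    filter_upwards [h2, self_mem_nhdsWithin] with t ht ht0
    have ht0' : (0:ℝ) < t := ht0
    simp only [zero_add, smul_eq_mul] at ht
    rw [hS0] at ht
    have := (pos_iff_pos_of_mul_pos ht).1 (inv_pos.2 ht0')
    linarith
  have e2 : ∀ᶠ t in nhdsWithin (0:ℝ) (Ioi 0), ⟪eTop n, nh (x + t • eTop n)⟫ < cos θ + δ := by
    have : ∀ᶠ t in nhds (0:ℝ), ⟪eTop n, nh (x + t • eTop n)⟫ < cos θ + δ :=
      d1.continuousAt.eventually (gt_mem_nhds (by simp only [hS0]; linarith))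
    exact this.filter_mono nhdsWithin_le_nhds
  have e3 : ∀ᶠ t in nhdsWithin (0:ℝ) (Ioi 0), x + t • eTop n ≠ 0 := by
    have : ∀ᶠ t in nhds (0:ℝ), x + t • eTop n ≠ 0 :=
      (aux_line x (eTop n) 0).continuousAt.eventually (by simp only [hl0]; exact eventually_ne_zero hx0)
    exact this.filter_mono nhdsWithin_le_nhds
  have h1 := (hasDerivAt_iff_tendsto_slope_zero.1 d2)
  have h2 := (h1.mono_left hsub)
  refine ge_of_tendsto h2 ?_
  filter_upwards [e1, e2, e3, self_mem_nhdsWithin] with t t1 t2 t3 t0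
  have ht0' : (0:ℝ) < t := t0
  rw [hP0, zero_add, sub_zero, smul_eq_mul, ← Phi_homog θ h a N σ t3]
  exact mul_nonneg (inv_nonneg.2 ht0'.le) (hst _ (norm_nh t3) t1 t2.le)

theorem rhs_bound {n : ℕ} {θ p q : ℝ} {f h : Euc n → ℝ} {K₁ K₂ m₂ KG : ℝ} (hm₂ : 0 < m₂)
    (hfpos : ∀ ξ ∈ cap n θ, 0 < f ξ) (hfK : CZeroNormLe n θ f K₁)
    (hhm : ∀ ξ ∈ cap n θ, m₂ ≤ h ξ) (hK : CZeroNormLe n θ h K₂)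
    (hG : ∀ x : Euc n, ‖x‖ = 1 → cos θ ≤ ⟪eTop n, x⟫ → ‖Gx n θ h x‖ ≤ KG)
    (x : Euc n) (hx : ‖x‖ = 1) (hx1 : cos θ ≤ ⟪eTop n, x⟫) :
    eqRHS n θ p q f h (piC n θ x) ≤ K₁ * (m₂ ^ (p - 1) + K₂ ^ (p - 1)) *
      ((m₂ ^ 2) ^ (((n : ℝ) + 1 - q) / 2) + (KG ^ 2) ^ (((n : ℝ) + 1 - q) / 2)) := by
  have hx0 := unit_ne hx
  have hcap : piC n θ x ∈ cap n θ := (piC_mem_cap θ hx0).2 (by rw [nh_unit hx]; exact hx1)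
  have hGm : m₂ ≤ ‖Gx n θ h x‖ := by
    have h1 := Gx_inner_nh θ h hx0
    have h2 := real_inner_le_norm (Gx n θ h x) (nh x)
    rw [h1, norm_nh hx0, mul_one] at h2
    exact (hhm _ hcap).trans h2
  rw [eqRHS_eq θ p q f h hx0]
  have f1 := hfpos _ hcap
  have f2 := (le_abs_self _).trans (hfK _ hcap)
  have g1 := hhm _ hcap
  have g2 := (le_abs_self _).trans (hK _ hcap)
  have r1 := aux_rpow (p - 1) hm₂ g1 g2
  have r2 := aux_rpow (((n : ℝ) + 1 - q) / 2) (m := m₂ ^ 2) (by positivity)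
    (pow_le_pow_left₀ hm₂.le hGm 2) (pow_le_pow_left₀ (norm_nonneg _) (hG x hx hx1) 2)
  have p1 : 0 ≤ h (piC n θ x) ^ (p - 1) := Real.rpow_nonneg (hm₂.le.trans g1) _
  have p2 : 0 ≤ (‖Gx n θ h x‖ ^ 2) ^ (((n : ℝ) + 1 - q) / 2) := Real.rpow_nonneg (by positivity) _
  exact mul_le_mul (mul_le_mul f2 r1 p1 (f1.le.trans f2)) r2 p2
    (mul_nonneg (f1.le.trans f2) (p1.trans r1))

theorem main_aux
    (n : ℕ) (hn : 1 ≤ n) (θ p q : ℝ) (hθ : θ ∈ Set.Ioo 0 (π / 2)) (hpq : q < p)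
    (m₁ m₂ K₁ K₂ : ℝ) (hm₁ : 0 < m₁) (hm₂ : 0 < m₂) :
    ∃ C : ℝ, 0 < C ∧
      ∀ f h : Euc n → ℝ,
        ContDiff ℝ (⊤ : ℕ∞) f → (∀ ξ ∈ cap n θ, 0 < f ξ) →
        (∀ ξ ∈ cap n θ, m₁ ≤ f ξ) → CTwoNormLe n θ f K₁ →
        ContDiff ℝ (⊤ : ℕ∞) h → PosOnCap n θ h →
        (∀ ξ ∈ cap n θ, m₂ ≤ h ξ) → CZeroNormLe n θ h K₂ →
        IsConvexSol n θ h → SolvesEq n θ p q f h → RobinBC n θ h →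
        ∀ ξ ∈ capBdry n θ,
          |shess n θ h ξ (conormal n θ ξ) (conormal n θ ξ)| ≤ C := by
  have hsin : 0 < sin θ := Real.sin_pos_of_pos_of_lt_pi hθ.1 (by linarith [hθ.2, Real.pi_pos])
  have hcos : 0 < cos θ := Real.cos_pos_of_mem_Ioo ⟨by linarith [hθ.1, Real.pi_pos], hθ.2⟩
  have hsc := Real.sin_sq_add_cos_sq θ
  have hcos1 : cos θ < 1 := by nlinarith [sq_nonneg (sin θ), pow_pos hsin 2]
  obtain ⟨KG, hKG⟩ : ∃ KG, KG = K₂ / sin θ := ⟨_, rfl⟩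
  obtain ⟨D, hD⟩ : ∃ D, D = (2 / cos θ) * (1 + (n + K₁ / m₁ + |p - 1| * KG / m₂) +
    |(n : ℝ) + 1 - q| / m₂) := ⟨_, rfl⟩
  obtain ⟨gm, hgm⟩ : ∃ gm, gm = K₁ * (m₂ ^ (p - 1) + K₂ ^ (p - 1)) *
      ((m₂ ^ 2) ^ (((n : ℝ) + 1 - q) / 2) + (KG ^ 2) ^ (((n : ℝ) + 1 - q) / 2)) := ⟨_, rfl⟩
  have hκ : 0 < (4 / cos θ) * (1 - ((1 + cos θ) / 2) ^ 2) := by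
    have : ((1 + cos θ) / 2) ^ 2 < 1 := by nlinarith
    have : 0 < 1 - ((1 + cos θ) / 2) ^ 2 := by linarith
    positivity
  obtain ⟨N, hN, hNbig⟩ : ∃ N : ℝ, 0 < N ∧
      D ^ (n + 1) * gm < 1 + (4 * N / cos θ) * (1 - ((1 + cos θ) / 2) ^ 2) := by
    refine ⟨(|D ^ (n + 1) * gm| + 1) / ((4 / cos θ) * (1 - ((1 + cos θ) / 2) ^ 2)),
      by positivity, ?_⟩
    have h1 : ∀ M : ℝ, (4 * M / cos θ) * (1 - ((1 + cos θ) / 2) ^ 2) =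
      M * ((4 / cos θ) * (1 - ((1 + cos θ) / 2) ^ 2)) := fun M => by ring
    rw [h1, div_mul_cancel₀ _ hκ.ne']
    linarith [le_abs_self (D ^ (n + 1) * gm)]
  obtain ⟨δ, hδ, hNδ, hδ1⟩ : ∃ δ : ℝ, 0 < δ ∧ 4 * N * δ ≤ 1 ∧ δ ≤ (1 - cos θ) / 2 := by
    refine ⟨min (1 / (4 * N)) ((1 - cos θ) / 2), lt_min (by positivity) (by linarith), ?_,
      min_le_right _ _⟩
    have := min_le_left (1 / (4 * N)) ((1 - cos θ) / 2)
    rw [le_div_iff₀ (by positivity)] at this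
    linarith
  obtain ⟨a, ha, haδ⟩ : ∃ a : ℝ, 1 ≤ a ∧ 2 * KG ≤ a * δ := by
    refine ⟨max 1 (2 * KG / δ), le_max_left _ _, ?_⟩
    rw [← div_le_iff₀ hδ]
    exact le_max_right _ _
  refine ⟨a + |K₂|, by positivity, ?_⟩
  intro f h hf hfpos hfm hfK hh hpos hhm hK hc hs hR ξ hξ
  obtain ⟨x, hxd⟩ : ∃ x, x = sphNormal n θ ξ := ⟨_, rfl⟩
  have hx : ‖x‖ = 1 := by rw [hxd]; exact hξ.2
  have hx0 := unit_ne hx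
  have hpx : piC n θ x = ξ := by
    rw [piC, nh_unit hx, hxd, sphNormal]; abel
  have hb : ⟪eTop n, x⟫ = cos θ := by
    rw [hxd, sphNormal, inner_sub_right, real_inner_smul_right, eVec_eq, inner_neg_right, eTop_inner,
      inner_eTop, hξ.1]
    ring
  have hcap : piC n θ x ∈ cap n θ := (piC_mem_cap θ hx0).2 (by rw [nh_unit hx, hb])
  have hK₁ : 0 ≤ K₁ := (abs_nonneg _).trans (hfK.1.1 _ hcap)
  have hK₂ : 0 ≤ K₂ := (abs_nonneg _).trans (hK _ hcap)
  have hKG0 : 0 ≤ KG := by rw [hKG]; positivity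
  have hD0 : 0 ≤ D := by rw [hD]; positivity
  have hG : ∀ x : Euc n, ‖x‖ = 1 → cos θ ≤ ⟪eTop n, x⟫ → ‖Gx n θ h x‖ ≤ KG := by
    intro y y1 y2
    rw [hKG]
    exact global_G hh hsin hcos hc hR hK y1 y2
  have hgmb := rhs_bound (p := p) (q := q) hm₂ hfpos hfK.1.1 hhm hK hG
  rw [← hgm] at hgmb
  have key : ∀ σ : ℝ, |σ| = 1 → 0 ≤ a * sin θ ^ 2 + σ * ⟪Tx n θ h x (eTop n), eTop n⟫ := by
    intro σ hσ
    refine bdry_deriv hh hR hsin hδ (a := a) (N := N) ?_ hx hb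
    intro y y1 y2 y3
    exact strip_nonneg hf hfpos hh hpos hc hs hR hsin hcos ha hN.le hσ hm₁ hm₂ hδ hNδ hδ1 haδ
      hfm hhm hfK.1.2 hG hgmb hD hD0 hNbig y1 y2 y3
  have k1 := key 1 (by simp)
  have k2 := key (-1) (by simp)
  have hmu : Pj x (eTop n) = (-sin θ) • conormal n θ ξ := by
    rw [← hpx, conormal_eq hsin hx, Pj_apply, nh_unit hx, real_inner_comm, hb, smul_smul, neg_mul,
      mul_inv_cancel₀ hsin.ne']
    module
  have hPP : ⟪Pj x (eTop n), Pj x (eTop n)⟫ = sin θ ^ 2 := by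
    rw [← inner_Pj, Pj_Pj hx0, Pj_apply, nh_unit hx, inner_sub_left, real_inner_smul_left, eTop_inner,
      real_inner_comm (eTop n) x, hb]
    linarith
  have hT : ⟪Tx n θ h x (eTop n), eTop n⟫ =
      sin θ ^ 2 * (shess n θ h ξ (conormal n θ ξ) (conormal n θ ξ) + h ξ) := by
    rw [Tx_eq θ hh hx0, hx, inv_one, one_smul, inner_T0 θ h hx0, hPP, hmu, hpx]
    simp only [shess, map_smul, real_inner_smul_left, real_inner_smul_right]
    ring
  rw [hT] at k1 k2
  have hs2 : 0 < sin θ ^ 2 := by positivity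
  have hK' := abs_le.1 (hK _ hcap)
  rw [hpx] at hK'
  rw [abs_of_nonneg hK₂]
  set Y := shess n θ h ξ (conormal n θ ξ) (conormal n θ ξ) with hY
  have j1 : 0 ≤ a + (Y + h ξ) := by
    have : 0 ≤ sin θ ^ 2 * (a + (Y + h ξ)) := by linarith
    exact (mul_nonneg_iff_of_pos_left hs2).1 this
  have j2 : 0 ≤ a - (Y + h ξ) := by
    have : 0 ≤ sin θ ^ 2 * (a - (Y + h ξ)) := by linarith
    exact (mul_nonneg_iff_of_pos_left hs2).1 this
  rw [abs_le]
  constructor <;> linarith [hK'.1, hK'.2]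
end

/-- Lemma 4.1, Step 2: boundary double normal estimate
`sup_{∂C_θ} |∇²h(μ,μ)| ≤ C`, with `C` depending only on `n`, `p`, `q`, lower bounds for
`f` and `h`, `‖f‖_{C²(C_θ)}` and `‖h‖_{C⁰(C_θ)}`. -/
theorem double_normal_boundary_estimate
    (n : ℕ) (hn : 1 ≤ n) (θ p q : ℝ) (hθ : θ ∈ Set.Ioo 0 (π / 2)) (hpq : q < p)
    (m₁ m₂ K₁ K₂ : ℝ) (hm₁ : 0 < m₁) (hm₂ : 0 < m₂) :
    ∃ C : ℝ, 0 < C ∧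
      ∀ f h : Euc n → ℝ,
        ContDiff ℝ (⊤ : ℕ∞) f → (∀ ξ ∈ cap n θ, 0 < f ξ) →
        (∀ ξ ∈ cap n θ, m₁ ≤ f ξ) → CTwoNormLe n θ f K₁ →
        ContDiff ℝ (⊤ : ℕ∞) h → PosOnCap n θ h →
        (∀ ξ ∈ cap n θ, m₂ ≤ h ξ) → CZeroNormLe n θ h K₂ →
        IsConvexSol n θ h → SolvesEq n θ p q f h → RobinBC n θ h →
        ∀ ξ ∈ capBdry n θ,
          |shess n θ h ξ (conormal n θ ξ) (conormal n θ ξ)| ≤ C := by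
  exact main_aux n hn θ p q hθ hpq m₁ m₂ K₁ K₂ hm₁ hm₂
end
end

section
/- Let p > q and θ ∈ (0, π/2), and let f > 0 be smooth on C_θ. If h¹, h² ∈ C^{2,α}(C_θ) are both positive convex solutions of det(∇²h + hσ) = f·h^{p-1}(h² + |∇h|²)^{(n+1-q)/2} in C_θ with ∇_μ h = cot θ · h on ∂C_θ, then h¹ ≡ h² on C_θ. -/
/- Formalization of statements from "The L_p dual Minkowski problem for capillary
hypersurfaces".

We work in the ambient space `ℝ^{n+1}`.  The spherical cap `C_θ` is the part of the unit
sphere centred at `cos θ • e` (where `e = -E_{n+1}`) lying in the closed upper half-space.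
Functions on `C_θ` are represented by ambient functions `h : Euc n → ℝ`; the intrinsic
(round-metric) gradient `∇h` and Hessian `∇²h` of the restriction of `h` to `C_θ` are
expressed through ambient derivatives (for tangential arguments these expressions depend
only on the restriction of `h` to the cap).  The quantity `det(∇²h + hσ)` is encoded as the
determinant of the endomorphism of `ℝ^{n+1}` acting as `∇²h + hσ` on the tangent space of
the cap and as the identity on the normal line. -/

open Real Set
open scoped RealInnerProductSpace

noncomputable section

lemma aux_one_le_det {m : Type*} [Fintype m] [DecidableEq m] (P : Matrix m m ℝ)
    (hP : P.PosSemidef) : 1 ≤ (1 + P).det := by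
  have hH : (1 + P).IsHermitian := (Matrix.isHermitian_one).add hP.1
  rw [hH.det_eq_prod_eigenvalues]
  have : ∀ i, 1 ≤ hH.eigenvalues i := by
    intro i
    rw [hH.eigenvalues_eq]
    have h1 := hP.re_dotProduct_nonneg (⇑(hH.eigenvectorBasis i))
    have h2 : (star (⇑(hH.eigenvectorBasis i)) ⬝ᵥ (⇑(hH.eigenvectorBasis i)) : ℝ) = 1 := by
      have := hH.eigenvectorBasis.orthonormal.1 i
      have h3 : ⟪hH.eigenvectorBasis i, hH.eigenvectorBasis i⟫ = (1:ℝ) := by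
        rw [real_inner_self_eq_norm_sq, this]; norm_num
      rw [PiLp.inner_apply] at h3
      simpa [dotProduct, pow_two] using h3
    rw [Matrix.add_mulVec, Matrix.one_mulVec, dotProduct_add, map_add]
    have h4 : (RCLike.re (star (⇑(hH.eigenvectorBasis i)) ⬝ᵥ (⇑(hH.eigenvectorBasis i)) : ℝ)) = (1:ℝ) := by
      rw [h2]; simp
    linarith
  simpa using Finset.prod_le_prod (s := Finset.univ) (f := fun _ => (1:ℝ)) (fun _ _ => zero_le_one) (fun i _ => this i)

open scoped MatrixOrder in
lemma aux_det_le {m : Type*} [Fintype m] [DecidableEq m] (A C : Matrix m m ℝ)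
    (hA : A.PosDef) (hC : C.PosSemidef) : A.det ≤ (A + C).det := by
  obtain ⟨B, hB⟩ := CStarAlgebra.nonneg_iff_eq_star_mul_self.mp hC.nonneg
  rw [Matrix.star_eq_conjTranspose] at hB
  subst hB
  rw [Matrix.det_add_mul _ _ hA.det_pos.ne'.isUnit]
  have := aux_one_le_det _ (hA.inv.posSemidef.mul_mul_conjTranspose_same B)
  nlinarith [hA.det_pos]

lemma aux_det_mono {n : ℕ} (A B : Euc n →ₗ[ℝ] Euc n) (hA : A.IsSymmetric) (hB : B.IsSymmetric)
    (hpos : ∀ x, x ≠ 0 → 0 < ⟪A x, x⟫) (hle : ∀ x, ⟪A x, x⟫ ≤ ⟪B x, x⟫) :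
    LinearMap.det A ≤ LinearMap.det B := by
  let b := EuclideanSpace.basisFun (Fin (n+1)) ℝ
  have hAp : A.IsPositive := by
    refine ⟨hA, fun x => ?_⟩
    by_cases hx : x = 0
    · simp [hx]
    · simpa using (hpos x hx).le
  have hBp : (B - A).IsPositive := by
    refine ⟨hB.sub hA, fun x => ?_⟩
    simpa [inner_sub_left] using hle x
  have h1 := (LinearMap.posSemidef_toMatrix_iff b).2 hAp
  have h2 := (LinearMap.posSemidef_toMatrix_iff b).2 hBp
  have hd : LinearMap.det A ≠ 0 := by
    intro h0
    have := LinearMap.bot_lt_ker_of_det_eq_zero h0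
    obtain ⟨x, hx, hx0⟩ := (Submodule.ne_bot_iff _).1 this.ne'
    have := hpos x hx0
    rw [LinearMap.mem_ker.1 hx] at this
    simp at this
  have h3 := h1.posDef_iff_det_ne_zero.2 (by rwa [LinearMap.det_toMatrix])
  have := aux_det_le _ _ h3 h2
  rwa [← map_add, add_sub_cancel, LinearMap.det_toMatrix, LinearMap.det_toMatrix] at this

lemma aux_second (g g' : ℝ → ℝ) (g2 : ℝ) (hg : ∀ t, HasDerivAt g (g' t) t) (h0 : g 0 = 0)
    (hle : ∀ᶠ t in nhdsWithin 0 (Ioi 0), g t ≤ 0) :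
    g' 0 ≤ 0 ∧ (HasDerivAt g' g2 0 → g' 0 = 0 → g2 ≤ 0) := by
  have key : ∀ (φ : ℝ → ℝ) (d : ℝ), HasDerivAt φ d 0 → φ 0 = 0 → 0 < d → ∀ᶠ t in nhdsWithin 0 (Ioi 0), 0 < φ t := by
    intro φ d hφ h0 hd
    have := (hasDerivAt_iff_tendsto_slope.1 hφ).mono_left (nhdsWithin_mono 0 (fun x (hx : 0 < x) => hx.ne'))
    filter_upwards [this.eventually (lt_mem_nhds hd), self_mem_nhdsWithin] with t ht ht0
    have ht0 : 0 < t := ht0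
    rw [slope_def_field, h0, sub_zero, sub_zero] at ht
    exact (div_pos_iff_of_pos_right ht0).1 ht
  constructor
  · by_contra! h
    obtain ⟨t, h1, h2⟩ := ((key g _ (hg 0) h0 h).and hle).exists
    linarith
  · intro hd hz
    by_contra! h
    have h1 := key g' _ hd hz h
    obtain ⟨δ, hδ, h2⟩ := mem_nhdsGT_iff_exists_Ioo_subset.1 (h1.and hle)
    have hδ : 0 < δ := hδ
    have hm : StrictMonoOn g (Icc 0 (δ/2)) := by
      apply strictMonoOn_of_deriv_pos (convex_Icc _ _)
      · exact fun t _ => (hg t).continuousAt.continuousWithinAt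
      · intro t ht
        rw [interior_Icc] at ht
        rw [(hg t).deriv]
        exact (h2 ⟨ht.1, by linarith [ht.2]⟩).1
    have h3 := hm (a := 0) (b := δ/2) ⟨le_rfl, by linarith⟩ ⟨by linarith, le_rfl⟩ (by linarith)
    have h4 := (h2 (a := δ/2) ⟨by linarith, by linarith⟩).2
    linarith

lemma aux_tproj (n : ℕ) (θ : ℝ) (ξ x : Euc n) :
    tproj n θ ξ x = x - ⟪sphNormal n θ ξ, x⟫ • sphNormal n θ ξ := by
  simp [tproj]

lemma aux_grad {n : ℕ} {h : Euc n → ℝ} (hh : ContDiff ℝ 2 h) (x : Euc n) :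
    HasFDerivAt h (innerSL ℝ (gradient h x)) x := by
  have := ((hh.differentiable (by norm_num)) x).hasGradientAt
  exact this.hasFDerivAt

lemma aux_grad_diff {n : ℕ} {h : Euc n → ℝ} (hh : ContDiff ℝ 2 h) :
    Differentiable ℝ (gradient h) := by
  have h1 : ContDiff ℝ 1 (fderiv ℝ h) := hh.fderiv_right (by norm_num)
  have h2 : gradient h = fun x => (InnerProductSpace.toDual ℝ (Euc n)).symm (fderiv ℝ h x) := rfl
  rw [h2]
  exact (InnerProductSpace.toDual ℝ (Euc n)).symm.toContinuousLinearEquiv.toContinuousLinearMap.differentiable.comp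
    (h1.differentiable (by norm_num))

lemma aux_symm {n : ℕ} {h : Euc n → ℝ} (hh : ContDiff ℝ 2 h) (x X Y : Euc n) :
    ⟪fderiv ℝ (gradient h) x X, Y⟫ = ⟪X, fderiv ℝ (gradient h) x Y⟫ := by
  have := second_derivative_symmetric (𝕜 := ℝ) (f := h) (f' := fun y => innerSL ℝ (gradient h y))
    (f'' := (innerSL ℝ).comp (fderiv ℝ (gradient h) x)) (x := x) (fun y => aux_grad hh y)
    ((innerSL ℝ).hasFDerivAt.comp x (aux_grad_diff hh x).hasFDerivAt) X Y
  simp at this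
  rw [this, real_inner_comm]

lemma aux_curve {n : ℕ} {θ : ℝ} {w : Euc n → ℝ} (hw : ContDiff ℝ 2 w) {ξ : Euc n}
    (hξ : ξ ∈ cap n θ) (hle : ∀ x ∈ cap n θ, w x ≤ 0) (h0 : w ξ = 0) (X : Euc n)
    (hX : IsTangent n θ ξ X) (hX1 : ‖X‖ = 1) (hin : 0 < ξ (Fin.last n) ∨ 0 < X (Fin.last n)) :
    ⟪gradient w ξ, X⟫ ≤ 0 ∧ (⟪gradient w ξ, X⟫ = 0 → shess n θ w ξ X X ≤ 0) := by
  set ν := sphNormal n θ ξ with hν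
  let γ : ℝ → Euc n := fun t => Real.cos θ • eVec n + (Real.cos t • ν + Real.sin t • X)
  let γ' : ℝ → Euc n := fun t => -Real.sin t • ν + Real.cos t • X
  have hγ : ∀ t, HasDerivAt γ (γ' t) t := by
    intro t
    have := (((Real.hasDerivAt_cos t).smul_const ν).add ((Real.hasDerivAt_sin t).smul_const X)).const_add
      (Real.cos θ • eVec n)
    exact this
  have hγ' : HasDerivAt γ' (-ν) 0 := by
    have := (((Real.hasDerivAt_sin 0).neg.smul_const ν).add ((Real.hasDerivAt_cos 0).smul_const X))
    rw [Real.cos_zero, Real.sin_zero] at this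
    have e : -ν = (-1:ℝ) • ν + (-0:ℝ) • X := by simp
    rw [e]
    exact this
  have hγ0 : γ 0 = ξ := by simp [γ, hν, sphNormal]
  have hγ'0 : γ' 0 = X := by simp [γ']
  have hnu : ‖ν‖ = 1 := hξ.2
  have hXν : ⟪X, ν⟫ = 0 := hX
  have hnorm : ∀ t, ‖sphNormal n θ (γ t)‖ = 1 := by
    intro t
    have e1 : sphNormal n θ (γ t) = Real.cos t • ν + Real.sin t • X := by simp [sphNormal, γ]
    have e2 : ‖Real.cos t • ν + Real.sin t • X‖ ^ 2 = 1 := by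
      rw [norm_add_sq_real, norm_smul, norm_smul, hnu, hX1, real_inner_smul_left,
        real_inner_smul_right, real_inner_comm, hXν]
      simp
    rw [e1]
    nlinarith [norm_nonneg (Real.cos t • ν + Real.sin t • X)]
  have hcoord : ∀ t, HasDerivAt (fun t => (γ t) (Fin.last n)) ((γ' t) (Fin.last n)) t := by
    intro t
    exact ((EuclideanSpace.proj (𝕜 := ℝ) (Fin.last n)).hasFDerivAt.comp_hasDerivAt t (hγ t))
  have hmem : ∀ᶠ t in nhdsWithin 0 (Ioi 0), γ t ∈ cap n θ := by
    rcases lt_or_eq_of_le hξ.1 with hp | hz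
    · have hc := (hcoord 0).continuousAt
      have := hc.eventually (lt_mem_nhds (show 0 < (γ 0) (Fin.last n) by rw [hγ0]; exact hp))
      filter_upwards [this.filter_mono nhdsWithin_le_nhds] with t ht
      exact ⟨ht.le, hnorm t⟩
    · have hXl : 0 < X (Fin.last n) := by
        rcases hin with h | h
        · linarith
        · exact h
      have hs := (hasDerivAt_iff_tendsto_slope.1 (hcoord 0)).mono_left
        (nhdsWithin_mono 0 (fun x (hx : x ∈ Ioi (0:ℝ)) => (ne_of_gt hx : x ≠ 0)))
      rw [hγ'0] at hs
      filter_upwards [hs.eventually (lt_mem_nhds hXl), self_mem_nhdsWithin] with t ht ht0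
      have ht0 : 0 < t := ht0
      rw [slope_def_field, hγ0, ← hz, sub_zero, sub_zero] at ht
      exact ⟨((div_pos_iff_of_pos_right ht0).1 ht).le, hnorm t⟩
  have hg : ∀ t, HasDerivAt (fun t => w (γ t)) (⟪gradient w (γ t), γ' t⟫) t := by
    intro t
    exact (aux_grad hw (γ t)).comp_hasDerivAt t (hγ t)
  have hgrad : HasDerivAt (fun t => gradient w (γ t)) (fderiv ℝ (gradient w) ξ X) 0 := by
    have h1 := (aux_grad_diff hw (γ 0)).hasFDerivAt.comp_hasDerivAt 0 (hγ 0)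
    rw [hγ0, hγ'0] at h1
    exact h1
  have hg2 := hgrad.inner ℝ hγ'
  have := aux_second (fun t => w (γ t)) (fun t => ⟪gradient w (γ t), γ' t⟫)
    (⟪gradient w (γ 0), -ν⟫ + ⟪fderiv ℝ (gradient w) ξ X, γ' 0⟫) hg (by simp only [hγ0, h0])
    (hmem.mono fun t ht => hle _ ht)
  simp only [hγ0, hγ'0] at this hg2
  refine ⟨this.1, fun hz => ?_⟩
  have h2 := this.2 hg2 hz
  have h3 : ⟪X, X⟫ = 1 := by rw [real_inner_self_eq_norm_sq, hX1]; norm_num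
  rw [inner_neg_right] at h2
  rw [shess, h3, ← hν]
  linarith

lemma aux_shess_smul {n : ℕ} (θ : ℝ) (w : Euc n → ℝ) (ξ X : Euc n) (a : ℝ) :
    shess n θ w ξ (a • X) (a • X) = a ^ 2 * shess n θ w ξ X X := by
  simp only [shess, map_smul, real_inner_smul_left, real_inner_smul_right]
  ring

lemma aux_curve' {n : ℕ} {θ : ℝ} {w : Euc n → ℝ} (hw : ContDiff ℝ 2 w) {ξ : Euc n}
    (hξ : ξ ∈ cap n θ) (hle : ∀ x ∈ cap n θ, w x ≤ 0) (h0 : w ξ = 0) (X : Euc n)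
    (hX : IsTangent n θ ξ X) (hin : 0 < ξ (Fin.last n) ∨ 0 < X (Fin.last n)) :
    ⟪gradient w ξ, X⟫ ≤ 0 ∧ (⟪gradient w ξ, X⟫ = 0 → shess n θ w ξ X X ≤ 0) := by
  by_cases hX0 : X = 0
  · subst hX0; simp [shess]
  have hpos : 0 < ‖X‖ := norm_pos_iff.2 hX0
  have hinv : 0 < ‖X‖⁻¹ := inv_pos.2 hpos
  have := aux_curve hw hξ hle h0 (‖X‖⁻¹ • X) (by
    unfold IsTangent at *; rw [real_inner_smul_left, hX, mul_zero])
    (by rw [norm_smul, norm_inv, norm_norm, inv_mul_cancel₀ hpos.ne'])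
    (hin.imp id fun h => by simpa using mul_pos hinv h)
  rw [real_inner_smul_right, aux_shess_smul] at this
  refine ⟨?_, fun hz => ?_⟩
  · by_contra! h
    nlinarith [this.1, mul_pos hinv h]
  · have h1 := this.2 (by rw [hz, mul_zero])
    by_contra! h
    nlinarith [mul_pos (pow_pos hinv 2) h]

lemma aux_eVec {n : ℕ} (x : Euc n) : ⟪x, eVec n⟫ = - x (Fin.last n) := by
  simp [eVec, EuclideanSpace.inner_single_right]

lemma aux_inner_sgrad {n : ℕ} {θ : ℝ} (w : Euc n → ℝ) {ξ X : Euc n} (hX : IsTangent n θ ξ X) :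
    ⟪sgrad n θ w ξ, X⟫ = ⟪gradient w ξ, X⟫ := by
  have hX : ⟪X, sphNormal n θ ξ⟫ = 0 := hX
  rw [sgrad, aux_tproj, inner_sub_left, real_inner_smul_left,
    real_inner_comm X (sphNormal n θ ξ), hX]
  ring

lemma aux_touch {n : ℕ} {θ : ℝ} (hθ : θ ∈ Set.Ioo 0 (π / 2)) {w : Euc n → ℝ}
    (hw : ContDiff ℝ 2 w) {ξ : Euc n}
    (hξ : ξ ∈ cap n θ) (hle : ∀ x ∈ cap n θ, w x ≤ 0) (h0 : w ξ = 0)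
    (hr : ξ ∈ capBdry n θ → ⟪sgrad n θ w ξ, conormal n θ ξ⟫ = 0) :
    sgrad n θ w ξ = 0 ∧ ∀ X, IsTangent n θ ξ X → shess n θ w ξ X X ≤ 0 := by
  have hsin : 0 < Real.sin θ := Real.sin_pos_of_pos_of_lt_pi hθ.1 (by linarith [hθ.2, Real.pi_pos])
  -- a direction `m` with the required properties
  have hnu : ⟪sphNormal n θ ξ, sphNormal n θ ξ⟫ = 1 := by
    rw [real_inner_self_eq_norm_sq, hξ.2]; norm_num
  have htan : IsTangent n θ ξ (sgrad n θ w ξ) := by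
    unfold IsTangent sgrad
    rw [aux_tproj, inner_sub_left, real_inner_smul_left, hnu, real_inner_comm (gradient w ξ)]
    simp [real_inner_comm]
  have hm : 0 < ξ (Fin.last n) ∨ ∃ m, IsTangent n θ ξ m ∧ 0 < m (Fin.last n) ∧ ⟪gradient w ξ, m⟫ = 0 := by
    rcases lt_or_eq_of_le hξ.1 with hp | hz
    · exact Or.inl hp
    right
    have hb : ξ ∈ capBdry n θ := ⟨hz.symm, hξ.2⟩
    have hee : ⟪eVec n, eVec n⟫ = (1:ℝ) := by rw [aux_eVec]; simp [eVec]
    have hxe : ⟪ξ, eVec n⟫ = 0 := by rw [aux_eVec, ← hz, neg_zero]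
    have hex : ⟪eVec n, ξ⟫ = 0 := by rw [real_inner_comm, hxe]
    have hxx : ⟪ξ, ξ⟫ = Real.sin θ ^ 2 := by
      have := hnu
      simp only [sphNormal, inner_sub_left, inner_sub_right, real_inner_smul_left,
        real_inner_smul_right, hee, hxe, hex] at this
      nlinarith [Real.sin_sq_add_cos_sq θ]
    have ht : IsTangent n θ ξ (conormal n θ ξ) := by
      simp only [IsTangent, conormal, sphNormal, inner_sub_right, inner_add_left,
        real_inner_smul_left, real_inner_smul_right, hee, hxe, hex, hxx, Real.cot_eq_cos_div_sin]
      field_simp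
      ring
    refine ⟨-conormal n θ ξ, ?_, ?_, ?_⟩
    · unfold IsTangent at *; rw [inner_neg_left, ht, neg_zero]
    · have : (-conormal n θ ξ) (Fin.last n) = Real.sin θ := by
        simp [conormal, eVec, ← hz]
      rw [this]; exact hsin
    · rw [inner_neg_right, ← aux_inner_sgrad w ht, hr hb, neg_zero]
  have hlin : ∀ X Y : Euc n, ∀ s : ℝ, IsTangent n θ ξ X → IsTangent n θ ξ Y → IsTangent n θ ξ (X + s • Y) := by
    intro X Y s h1 h2
    unfold IsTangent at *
    rw [inner_add_left, real_inner_smul_left, h1, h2]; ring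
  have hgle : ∀ X, IsTangent n θ ξ X → ⟪gradient w ξ, X⟫ ≤ 0 := by
    intro X hX
    rcases hm with hp | ⟨m, hmt, hm0, hmg⟩
    · exact (aux_curve' hw hξ hle h0 X hX (Or.inl hp)).1
    · have := (aux_curve' hw hξ hle h0 (X + ((1 + |X (Fin.last n)|) / m (Fin.last n)) • m)
        (hlin _ _ _ hX hmt) (Or.inr (by
          simp only [PiLp.add_apply, PiLp.smul_apply, smul_eq_mul]
          rw [div_mul_cancel₀ _ hm0.ne']
          linarith [neg_abs_le (X (Fin.last n))]))).1
      rwa [inner_add_right, real_inner_smul_right, hmg, mul_zero, add_zero] at this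
  have hg0 : sgrad n θ w ξ = 0 := by
    have := hgle _ htan
    rw [← aux_inner_sgrad w htan] at this
    exact inner_self_eq_zero.1 (le_antisymm this real_inner_self_nonneg)
  refine ⟨hg0, ?_⟩
  have hgz : ∀ X, IsTangent n θ ξ X → ⟪gradient w ξ, X⟫ = 0 := by
    intro X hX
    rw [← aux_inner_sgrad w hX, hg0, inner_zero_left]
  intro X hX
  rcases hm with hp | ⟨m, hmt, hm0, hmg⟩
  · exact (aux_curve' hw hξ hle h0 X hX (Or.inl hp)).2 (hgz X hX)
  wlog hX0 : 0 ≤ X (Fin.last n) generalizing X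
  · have h1 := this ((-1:ℝ) • X) (by
      unfold IsTangent at *; rw [real_inner_smul_left, hX, mul_zero]) (by
      simp only [PiLp.smul_apply, smul_eq_mul]; linarith)
    rw [aux_shess_smul] at h1
    linarith
  have hev : ∀ᶠ s in nhdsWithin (0:ℝ) (Ioi 0), shess n θ w ξ (X + s • m) (X + s • m) ≤ 0 := by
    filter_upwards [self_mem_nhdsWithin] with s hs
    have hs : 0 < s := hs
    refine (aux_curve' hw hξ hle h0 _ (hlin _ _ s hX hmt) (Or.inr ?_)).2 (hgz _ (hlin _ _ s hX hmt))
    simp only [PiLp.add_apply, PiLp.smul_apply, smul_eq_mul]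
    nlinarith [mul_pos hs hm0]
  have hc : Continuous fun s : ℝ => shess n θ w ξ (X + s • m) (X + s • m) := by
    unfold shess
    fun_prop
  have hlim := (hc.tendsto 0).mono_left (nhdsWithin_le_nhds (s := Ioi 0))
  have := le_of_tendsto hlim hev
  simpa using this

lemma aux_tproj_symm {n : ℕ} (θ : ℝ) (ξ x y : Euc n) :
    ⟪tproj n θ ξ x, y⟫ = ⟪x, tproj n θ ξ y⟫ := by
  rw [aux_tproj, aux_tproj, inner_sub_left, inner_sub_right, real_inner_smul_left,
    real_inner_smul_right, real_inner_comm x]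
  ring

lemma aux_hess_symm {n : ℕ} (θ : ℝ) {h : Euc n → ℝ} (hh : ContDiff ℝ 2 h) (ξ x y : Euc n) :
    ⟪hessOp n θ h ξ x, y⟫ = ⟪x, hessOp n θ h ξ y⟫ := by
  simp only [hessOp, thessOp, normalPart, _root_.add_apply,
    _root_.sub_apply, _root_.smul_apply, ContinuousLinearMap.comp_apply,
    ContinuousLinearMap.smulRight_apply, innerSL_apply_apply, inner_add_left, inner_add_right,
    inner_sub_left, inner_sub_right, real_inner_smul_left, real_inner_smul_right,
    aux_tproj_symm, aux_symm hh]
  rw [real_inner_comm x]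
  ring

lemma aux_hess_quad {n : ℕ} {θ : ℝ} {h : Euc n → ℝ} {ξ : Euc n} (hξ : ξ ∈ cap n θ) (x : Euc n) :
    IsTangent n θ ξ (tproj n θ ξ x) ∧
    ⟪hessOp n θ h ξ x, x⟫ = shess n θ h ξ (tproj n θ ξ x) (tproj n θ ξ x)
      + h ξ * ⟪tproj n θ ξ x, tproj n θ ξ x⟫ + ⟪sphNormal n θ ξ, x⟫ ^ 2 := by
  have hnu : ⟪sphNormal n θ ξ, sphNormal n θ ξ⟫ = 1 := by
    rw [real_inner_self_eq_norm_sq, hξ.2]; norm_num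
  have ht : IsTangent n θ ξ (tproj n θ ξ x) := by
    unfold IsTangent
    rw [aux_tproj, inner_sub_left, real_inner_smul_left, hnu, real_inner_comm x]
    ring
  refine ⟨ht, ?_⟩
  have hTT : ⟪tproj n θ ξ x, tproj n θ ξ x⟫ = ⟪tproj n θ ξ x, x⟫ := by
    have h1 : ⟪tproj n θ ξ x, sphNormal n θ ξ⟫ = 0 := ht
    conv_lhs => rw [aux_tproj n θ ξ x, ← aux_tproj n θ ξ x]
    nth_rewrite 2 [aux_tproj]
    rw [inner_sub_right, real_inner_smul_right, h1]; ring
  rw [hTT]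
  simp only [hessOp, thessOp, normalPart, _root_.add_apply,
    _root_.sub_apply, _root_.smul_apply, ContinuousLinearMap.comp_apply,
    ContinuousLinearMap.smulRight_apply, innerSL_apply_apply, inner_add_left, 
    inner_sub_left, real_inner_smul_left, shess, hTT]
  rw [aux_tproj_symm θ ξ (fderiv ℝ (gradient h) ξ (tproj n θ ξ x)) x]
  ring

lemma aux_det_normal {n : ℕ} {θ : ℝ} {h : Euc n → ℝ} {ξ : Euc n} (hξ : ξ ∈ cap n θ) (c : ℝ) :
    LinearMap.det (hessOp n θ h ξ + (c - 1) • normalPart n θ ξ).toLinearMap = c * sdet n θ h ξ := by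
  have hnu : ⟪sphNormal n θ ξ, sphNormal n θ ξ⟫ = 1 := by
    rw [real_inner_self_eq_norm_sq, hξ.2]; norm_num
  have hTn : tproj n θ ξ (sphNormal n θ ξ) = 0 := by
    rw [aux_tproj, hnu]; simp
  have hHn : hessOp n θ h ξ (sphNormal n θ ξ) = sphNormal n θ ξ := by
    simp [hessOp, thessOp, normalPart, hTn, hξ.2]
  have e : (hessOp n θ h ξ + (c - 1) • normalPart n θ ξ).toLinearMap
      = (hessOp n θ h ξ).toLinearMap ∘ₗ LinearMap.transvection
        ((innerSL ℝ (sphNormal n θ ξ)).toLinearMap) ((c - 1) • sphNormal n θ ξ) := by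
    ext1 x
    simp only [ContinuousLinearMap.coe_coe, LinearMap.comp_apply, LinearMap.transvection.apply,
      map_add, map_smul, hHn, normalPart, _root_.add_apply,
      _root_.smul_apply, ContinuousLinearMap.smulRight_apply]
    rw [smul_comm]
  rw [e, LinearMap.det_comp, LinearMap.transvection.det, sdet]
  simp only [ContinuousLinearMap.coe_coe, innerSL_apply_apply, real_inner_smul_right, hnu]
  ring

lemma aux_lin {n : ℕ} {h₁ h₂ : Euc n → ℝ} (hh₁ : ContDiff ℝ 2 h₁) (hh₂ : ContDiff ℝ 2 h₂) (c : ℝ) :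
    gradient (fun x => h₁ x - c * h₂ x) = fun x => gradient h₁ x - c • gradient h₂ x := by
  funext x
  apply HasGradientAt.gradient
  have h := (aux_grad hh₁ x).sub ((aux_grad hh₂ x).const_mul c)
  refine hasGradientAt_iff_hasFDerivAt.2 ?_
  convert! h using 1
  ext y
  simp [inner_sub_left, real_inner_smul_left]

lemma aux_cap_compact (n : ℕ) (θ : ℝ) : IsCompact (cap n θ) := by
  have hc : Continuous (sphNormal n θ) := by unfold sphNormal; fun_prop
  refine Metric.isCompact_of_isClosed_isBounded ?_ ?_
  · have h1 : Continuous fun ξ : Euc n => ξ (Fin.last n) := by fun_prop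
    exact (isClosed_le continuous_const h1).inter (isClosed_eq hc.norm continuous_const)
  · refine (Metric.isBounded_closedBall (x := Real.cos θ • eVec n) (r := 1)).subset fun ξ hξ => ?_
    rw [mem_closedBall_iff_norm]
    exact hξ.2.le

lemma aux_le (n : ℕ) (θ p q : ℝ) (hθ : θ ∈ Set.Ioo 0 (π / 2)) (hpq : q < p)
    (f : Euc n → ℝ) (hfpos : ∀ ξ ∈ cap n θ, 0 < f ξ)
    (h₁ h₂ : Euc n → ℝ) (hh₁ : ContDiff ℝ 2 h₁) (hh₂ : ContDiff ℝ 2 h₂)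
    (hp₁ : PosOnCap n θ h₁) (hp₂ : PosOnCap n θ h₂)
    (hc₁ : IsConvexSol n θ h₁)
    (he₁ : SolvesEq n θ p q f h₁) (he₂ : SolvesEq n θ p q f h₂)
    (hr₁ : RobinBC n θ h₁) (hr₂ : RobinBC n θ h₂) :
    ∀ ξ ∈ cap n θ, h₁ ξ ≤ h₂ ξ := by
  intro η hη
  obtain ⟨ξ, hξ, hmax⟩ := (aux_cap_compact n θ).exists_isMaxOn ⟨η, hη⟩
    (f := fun x => h₁ x / h₂ x)
    (hh₁.continuous.continuousOn.div hh₂.continuous.continuousOn fun x hx => (hp₂ x hx).ne')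
  set c := h₁ ξ / h₂ ξ with hcdef
  have hcpos : 0 < c := div_pos (hp₁ ξ hξ) (hp₂ ξ hξ)
  have hcle : ∀ x ∈ cap n θ, h₁ x ≤ c * h₂ x := fun x hx =>
    (div_le_iff₀ (hp₂ x hx)).1 (hmax hx)
  have hceq : h₁ ξ = c * h₂ ξ := by rw [hcdef, div_mul_cancel₀ _ (hp₂ ξ hξ).ne']
  suffices hc1 : c ≤ 1 by
    nlinarith [hcle η hη, hp₂ η hη]
  have hlin := aux_lin hh₁ hh₂ c
  have hsg : sgrad n θ (fun x => h₁ x - c * h₂ x) ξ = sgrad n θ h₁ ξ - c • sgrad n θ h₂ ξ := by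
    simp only [sgrad, hlin, map_sub, map_smul]
  have hsh : ∀ X, shess n θ (fun x => h₁ x - c * h₂ x) ξ X X
      = shess n θ h₁ ξ X X - c * shess n θ h₂ ξ X X := by
    intro X
    have hd : fderiv ℝ (fun x => gradient h₁ x - c • gradient h₂ x) ξ
        = fderiv ℝ (gradient h₁) ξ - c • fderiv ℝ (gradient h₂) ξ :=
      ((aux_grad_diff hh₁ ξ).hasFDerivAt.sub ((aux_grad_diff hh₂ ξ).hasFDerivAt.const_smul c)).fderiv
    simp only [shess, hlin, hd, _root_.sub_apply, _root_.smul_apply,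
      inner_sub_left, real_inner_smul_left]
    ring
  obtain ⟨hg, hH⟩ := aux_touch hθ (w := fun x => h₁ x - c * h₂ x)
    (hh₁.sub (contDiff_const.mul hh₂)) hξ (fun x hx => by linarith [hcle x hx]) (by linarith)
    (fun hb => by
      rw [hsg, inner_sub_left, real_inner_smul_left, hr₁ ξ hb, hr₂ ξ hb, hceq]; ring)
  rw [hsg, sub_eq_zero] at hg
  -- determinant comparison
  have hdet : c * sdet n θ h₁ ξ ≤ c ^ (n + 1) * sdet n θ h₂ ξ := by
    have e2 : LinearMap.det (c • hessOp n θ h₂ ξ).toLinearMap = c ^ (n + 1) * sdet n θ h₂ ξ := by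
      rw [ContinuousLinearMap.toLinearMap_smul, LinearMap.det_smul, sdet]
      simp
    rw [← e2, ← aux_det_normal hξ]
    have hN : ∀ x y, ⟪normalPart n θ ξ x, y⟫ = ⟪sphNormal n θ ξ, x⟫ * ⟪sphNormal n θ ξ, y⟫ := by
      intro x y
      simp [normalPart, real_inner_smul_left]
    apply aux_det_mono
    · intro x y
      simp only [ContinuousLinearMap.coe_coe, _root_.add_apply,
        _root_.smul_apply, inner_add_left, inner_add_right, real_inner_smul_left,
        real_inner_smul_right, hN, aux_hess_symm θ hh₁]
      rw [real_inner_comm (normalPart n θ ξ y) x, hN]; ring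
    · intro x y
      simp only [ContinuousLinearMap.coe_coe, 
        _root_.smul_apply, real_inner_smul_left,
        real_inner_smul_right, aux_hess_symm θ hh₂]
    · intro x hx
      simp only [ContinuousLinearMap.coe_coe, _root_.add_apply,
        _root_.smul_apply, inner_add_left, real_inner_smul_left, hN]
      obtain ⟨ht, hq⟩ := aux_hess_quad (h := h₁) hξ x
      rw [hq]
      by_cases hT : tproj n θ ξ x = 0
      · have hx' : x = ⟪sphNormal n θ ξ, x⟫ • sphNormal n θ ξ := by
          rw [aux_tproj, sub_eq_zero] at hT; exact hT
        have hne : ⟪sphNormal n θ ξ, x⟫ ≠ 0 := by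
          intro h; rw [h, zero_smul] at hx'; exact hx hx'
        rw [hT]
        simp only [shess, map_zero, inner_zero_left]
        have : 0 < ⟪sphNormal n θ ξ, x⟫ ^ 2 := by positivity
        nlinarith [mul_pos hcpos this]
      · have h1 := hc₁ ξ hξ _ ht hT
        nlinarith [mul_nonneg hcpos.le (sq_nonneg ⟪sphNormal n θ ξ, x⟫)]
    · intro x
      simp only [ContinuousLinearMap.coe_coe, _root_.add_apply,
        _root_.smul_apply, inner_add_left, real_inner_smul_left, hN]
      obtain ⟨ht, hq⟩ := aux_hess_quad (h := h₁) hξ x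
      obtain ⟨-, hq2⟩ := aux_hess_quad (h := h₂) hξ x
      have h1 := hH _ ht
      rw [hsh] at h1
      rw [hq, hq2, hceq]
      linarith
  rw [he₁ ξ hξ, he₂ ξ hξ] at hdet
  have hB : 0 < h₂ ξ ^ 2 + ‖sgrad n θ h₂ ξ‖ ^ 2 := by
    have := hp₂ ξ hξ
    positivity
  have hR2 : 0 < eqRHS n θ p q f h₂ ξ := by
    unfold eqRHS
    exact mul_pos (mul_pos (hfpos ξ hξ) (Real.rpow_pos_of_pos (hp₂ ξ hξ) _))
      (Real.rpow_pos_of_pos hB _)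
  have hR1 : eqRHS n θ p q f h₁ ξ = c ^ ((n:ℝ) + (p - q)) * eqRHS n θ p q f h₂ ξ := by
    unfold eqRHS
    rw [hg, hceq, norm_smul, Real.norm_of_nonneg hcpos.le,
      show (c * h₂ ξ) ^ 2 + (c * ‖sgrad n θ h₂ ξ‖) ^ 2
        = c ^ 2 * (h₂ ξ ^ 2 + ‖sgrad n θ h₂ ξ‖ ^ 2) by ring,
      Real.mul_rpow hcpos.le (hp₂ ξ hξ).le, Real.mul_rpow (by positivity) hB.le,
      ← Real.rpow_natCast c 2, ← Real.rpow_mul hcpos.le,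
      show (n:ℝ) + (p - q) = (p - 1) + ((2:ℕ):ℝ) * (((n:ℝ) + 1 - q) / 2) by push_cast; ring,
      Real.rpow_add hcpos]
    ring
  rw [hR1, ← mul_assoc, mul_le_mul_iff_of_pos_right hR2, ← Real.rpow_natCast c (n + 1)] at hdet
  have h5 : c * c ^ ((n:ℝ) + (p - q)) = c ^ (((n + 1 : ℕ) : ℝ)) * c ^ (p - q) := by
    nth_rewrite 1 [← Real.rpow_one c]
    rw [← Real.rpow_add hcpos, ← Real.rpow_add hcpos]
    congr 1; push_cast; ring
  rw [h5] at hdet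
  by_contra! hlt
  have h6 : 1 < c ^ (p - q) := Real.one_lt_rpow hlt (by linarith)
  nlinarith [Real.rpow_pos_of_pos hcpos (((n + 1 : ℕ) : ℝ))]

/-- Lemma 5.1, uniqueness: for `p > q` and `θ ∈ (0, π/2)`, two positive
convex `C²` solutions of `det(∇²h + hσ) = f·h^{p-1}(h² + |∇h|²)^{(n+1-q)/2}` in `C_θ` with
`∇_μ h = cot θ · h` on `∂C_θ` coincide on `C_θ`. -/
theorem uniqueness_of_solutions
    (n : ℕ) (hn : 1 ≤ n) (θ p q : ℝ) (hθ : θ ∈ Set.Ioo 0 (π / 2)) (hpq : q < p)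
    (f : Euc n → ℝ) (hf : ContDiff ℝ (⊤ : ℕ∞) f) (hfpos : ∀ ξ ∈ cap n θ, 0 < f ξ)
    (h₁ h₂ : Euc n → ℝ) (hh₁ : ContDiff ℝ 2 h₁) (hh₂ : ContDiff ℝ 2 h₂)
    (hp₁ : PosOnCap n θ h₁) (hp₂ : PosOnCap n θ h₂)
    (hc₁ : IsConvexSol n θ h₁) (hc₂ : IsConvexSol n θ h₂)
    (he₁ : SolvesEq n θ p q f h₁) (he₂ : SolvesEq n θ p q f h₂)
    (hr₁ : RobinBC n θ h₁) (hr₂ : RobinBC n θ h₂) :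
    Set.EqOn h₁ h₂ (cap n θ) := by
  intro ξ hξ
  exact le_antisymm
    (aux_le n θ p q hθ hpq f hfpos h₁ h₂ hh₁ hh₂ hp₁ hp₂ hc₁ he₁ he₂ hr₁ hr₂ ξ hξ)
    (aux_le n θ p q hθ hpq f hfpos h₂ h₁ hh₂ hh₁ hp₂ hp₁ hc₂ he₂ he₁ hr₂ hr₁ ξ hξ)
end
end

section
/- Let θ ∈ (0, π/2), let N := (0, …, 0, 1 − cos θ) ∈ C_θ be the top point of the cap, and define d(ξ) := d_N(ξ)²/(2θ), where d_N(ξ) is the geodesic distance from ξ to N on C_θ. Then d is smooth on C_θ, d = θ/2 and ∇d = μ on ∂C_θ, and the Hessian bound ∇²d ≥ min{1/θ, cot θ}·σ holds on all of C_θ. -/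
/- Formalization of statements from "The L_p dual Minkowski problem for capillary
hypersurfaces".

We work in the ambient space `ℝ^{n+1}`.  The spherical cap `C_θ` is the part of the unit
sphere centred at `cos θ • e` (where `e = -E_{n+1}`) lying in the closed upper half-space.
Functions on `C_θ` are represented by ambient functions `h : Euc n → ℝ`; the intrinsic
(round-metric) gradient `∇h` and Hessian `∇²h` of the restriction of `h` to `C_θ` are
expressed through ambient derivatives (for tangential arguments these expressions depend
only on the restriction of `h` to the cap).  The quantity `det(∇²h + hσ)` is encoded as the
determinant of the endomorphism of `ℝ^{n+1}` acting as `∇²h + hσ` on the tangent space of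
the cap and as the identity on the normal line. -/

open Real Set
open scoped RealInnerProductSpace

noncomputable section

lemma arctan_series_fun : ∃ K : ℝ → ℝ, (∀ s ∈ Metric.ball (0:ℝ) 1, ContDiffAt ℝ (⊤:ℕ∞) K s) ∧
    ∀ s : ℝ, 0 ≤ s → s < 1 → s * K s ^ 2 = arctan (√s) ^ 2 := by
  let c : ℕ → ℝ := fun n => (-1)^n / ((2*n+1 : ℕ) : ℝ)
  let p := FormalMultilinearSeries.ofScalars ℝ c
  have hr : (1:ENNReal) ≤ p.radius := by
    have := p.le_radius_of_bound (r := 1) 1 (by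
      intro n
      simp only [p, FormalMultilinearSeries.ofScalars_norm, c]
      simp only [norm_div, norm_pow, norm_neg, norm_one, one_pow, NNReal.coe_one, mul_one]
      rw [Real.norm_natCast]
      apply div_le_one_of_le₀
      · norm_cast; omega
      · positivity)
    simpa using this
  have hp : HasFPowerSeriesOnBall p.sum p 0 p.radius :=
    p.hasFPowerSeriesOnBall (lt_of_lt_of_le one_pos hr)
  refine ⟨p.sum, ?_, ?_⟩
  · intro s hs
    refine (hp.analyticAt_of_mem ?_).contDiffAt
    refine Metric.eball_subset_eball hr ?_
    rw [Metric.mem_eball, edist_dist]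
    simpa [Metric.mem_ball] using hs
  · intro s h0 h1
    have hsq : √s < 1 := by rw [Real.sqrt_lt' one_pos]; simpa using h1
    have h := Real.hasSum_arctan (x := √s) (by rw [Real.norm_of_nonneg (sqrt_nonneg _)]; exact hsq)
    have h2 : HasSum (fun n => c n * s ^ n) (p.sum s) := by
      have := hp.hasSum (y := s) (by
        refine Metric.eball_subset_eball hr ?_
        rw [Metric.mem_eball, edist_dist]
        simpa [abs_of_nonneg h0] using h1)
      simpa [p, mul_comm, FormalMultilinearSeries.ofScalars_apply_eq] using this
    have h3 := h2.mul_right (√s)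
    have : (fun n => c n * s^n * √s) = fun n : ℕ => (-1) ^ n * (√s) ^ (2 * n + 1) / ((2 * n + 1 : ℕ):ℝ) := by
      funext n
      simp only [c, pow_succ, pow_mul, Real.sq_sqrt h0]
      ring
    rw [this] at h3
    rw [← h3.unique h, mul_pow, Real.sq_sqrt h0]; ring

lemma arccos_sq_ext (c : ℝ) (hc : 0 < c) : ∃ F : ℝ → ℝ, ContDiff ℝ (⊤:ℕ∞) F ∧
    ∀ t, c ≤ t → t ≤ 1 → F t = arccos t ^ 2 := by
  obtain ⟨K, hK, hK2⟩ := arctan_series_fun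
  let A : ℝ → ℝ := fun t => (1/t^2 - 1) * K (1/t^2-1)^2
  have hA : ∀ t, 4/5 < t → t ≤ 1 → A t = arccos t ^ 2 := by
    intro t h1 h2
    have ht : 0 < t := by linarith
    have hs : 1 / t^2 - 1 = (1 - t^2)/t^2 := by field_simp
    rw [arccos_eq_arctan ht]
    have : √(1 - t^2)/t = √(1/t^2-1) := by
      rw [hs, Real.sqrt_div' _ (by positivity), Real.sqrt_sq ht.le]
    rw [this]
    apply hK2
    · rw [hs]; apply div_nonneg _ (by positivity); nlinarith
    · rw [hs, div_lt_one (by positivity)]; nlinarith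
  let G : ℝ → ℝ := fun t => if t < 1 then arccos t ^ 2 else A t
  refine ⟨fun t => smoothTransition (t/c) * G t, ?_, ?_⟩
  · rw [contDiff_iff_contDiffAt]
    intro t
    have hχ : ContDiffAt ℝ (⊤:ℕ∞) (fun t : ℝ => smoothTransition (t/c)) t :=
      (smoothTransition.contDiff.comp (contDiff_id.div_const c)).contDiffAt
    rcases lt_or_ge t 0 with ht | ht
    · refine (contDiffAt_const (c := (0:ℝ))).congr_of_eventuallyEq ?_
      filter_upwards [Iio_mem_nhds ht] with u hu
      rw [smoothTransition.zero_of_nonpos (div_nonpos_of_nonpos_of_nonneg (le_of_lt hu) hc.le), zero_mul]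
    refine hχ.mul ?_
    rcases lt_or_ge t 1 with h1 | h1
    · have : ContDiffAt ℝ (⊤:ℕ∞) (fun t => arccos t ^ 2) t :=
        ((contDiffAt_arccos (by linarith) (by linarith)).pow 2)
      refine this.congr_of_eventuallyEq ?_
      filter_upwards [Iio_mem_nhds h1] with u hu
      exact if_pos hu
    · have hA' : ContDiffAt ℝ (⊤:ℕ∞) A t := by
        have ht0 : t ≠ 0 := by linarith
        have hi : ContDiffAt ℝ (⊤:ℕ∞) (fun t : ℝ => 1/t^2-1) t :=
          (contDiffAt_const.div (contDiffAt_id.pow 2) (by simpa using ht0)).sub contDiffAt_const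
        refine hi.mul (ContDiffAt.pow (ContDiffAt.comp t (g := K) (hK _ ?_) hi) 2)
        rw [Metric.mem_ball, dist_zero_right, Real.norm_eq_abs, abs_lt]
        have h3 : 0 < 1 / t^2 := by positivity
        have h4 : 1 / t^2 ≤ 1 := by rw [div_le_one (by positivity)]; nlinarith
        constructor <;> linarith
      refine hA'.congr_of_eventuallyEq ?_
      filter_upwards [Ioi_mem_nhds (show (4/5:ℝ) < t by linarith)] with u hu
      simp only [G]
      split_ifs with h
      · exact (hA u hu h.le).symm
      · rfl
  · intro t h1 h2
    have : 1 ≤ t / c := by rw [le_div_iff₀ hc]; linarith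
    simp only [smoothTransition.one_of_one_le this, one_mul, G]
    split_ifs with h
    · rfl
    · exact hA t (by linarith) h2

lemma trig_mono {r θ : ℝ} (hr : 0 < r) (hrθ : r < θ) (hθ : θ < π/2) :
    θ * cos θ * sin r ≤ r * sin θ * cos r := by
  have hc := strictConcaveOn_sin_Icc.concaveOn
  have h := hc.2 (show (0:ℝ) ∈ Icc 0 π from ⟨le_rfl, pi_pos.le⟩)
    (show θ + r ∈ Icc 0 π from ⟨by linarith, by linarith⟩)
    (show 0 ≤ 2*r/(θ+r) from div_nonneg (by linarith) (by linarith))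
    (show 0 ≤ (θ-r)/(θ+r) from div_nonneg (by linarith) (by linarith))
    (by rw [← add_div, div_eq_one_iff_eq (by linarith)]; ring)
  have hpos : θ + r ≠ 0 := by linarith
  simp only [smul_eq_mul, sin_zero, mul_zero, zero_add] at h
  rw [div_mul_cancel₀ _ hpos, div_mul_eq_mul_div, div_le_iff₀ (by linarith), sin_add, sin_sub] at h
  nlinarith

lemma hasDerivAt_G {y : ℝ} (h1 : -1 < y) (h2 : y < 1) :
    HasDerivAt (fun y => arccos y / √(1 - y^2))
      (-(1/(1-y^2)) * (1 - y * arccos y / √(1-y^2))) y := by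
  have hp : 0 < 1 - y^2 := by nlinarith
  have hs : 0 < √(1-y^2) := Real.sqrt_pos.2 hp
  have e1 := hasDerivAt_arccos (x := y) (by linarith) (by linarith)
  have e2 : HasDerivAt (fun y : ℝ => 1 - y^2) (-(2*y)) y := by
    simpa using ((hasDerivAt_id y).pow 2).const_sub 1
  have e3 := e1.div (e2.sqrt hp.ne') hs.ne'
  refine e3.congr_deriv ?_
  have hsq : √(1-y^2)^2 = 1 - y^2 := Real.sq_sqrt hp.le
  have h5 : 1/(1-y^2) = 1/√(1-y^2)^2 := by rw [hsq]
  rw [h5]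
  clear e3 hsq e1 h5
  generalize √(1-y^2) = S at *
  field_simp
  ring

lemma hasDerivAt_g {y θ : ℝ} (h1 : -1 < y) (h2 : y < 1) :
    HasDerivAt (fun y => arccos y ^ 2 / (2 * θ)) (-(1/θ) * (arccos y / √(1 - y^2))) y := by
  have e1 := hasDerivAt_arccos (x := y) (by linarith) (by linarith)
  have := (e1.pow 2).div_const (2*θ)
  refine this.congr_deriv ?_
  have hp : 0 < 1 - y^2 := by nlinarith
  have hs : 0 < √(1-y^2) := Real.sqrt_pos.2 hp
  by_cases h : θ = 0
  · simp [h]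
  · field_simp
    norm_num

lemma last_eq_inner (n : ℕ) (X : Euc n) : X (Fin.last n) = ⟪X, EuclideanSpace.single (Fin.last n) (1:ℝ)⟫ := by
  simp [EuclideanSpace.inner_single_right]

lemma eVec_last (n : ℕ) : eVec n (Fin.last n) = -1 := by simp [eVec]

lemma curve_facts (n : ℕ) (θ : ℝ) (hθ : θ ∈ Set.Ioo 0 (π / 2)) (D : Euc n → ℝ) (hD : ContDiff ℝ 2 D)
    (hEq : Set.EqOn D (dCap n θ) (cap n θ)) (ξ X : Euc n) (hν : ‖sphNormal n θ ξ‖ = 1)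
    (hξ0 : 0 < ξ (Fin.last n)) (a : ℝ) (ha : ξ (Fin.last n) + cos θ = a) (ha1 : a < 1)
    (hX : ‖X‖ = 1) (hT : IsTangent n θ ξ X) :
    ⟪gradient D ξ, X⟫ = -(1/θ) * (arccos a / √(1 - a^2)) * X (Fin.last n) ∧
    shess n θ D ξ X X = -(1/θ) * ((-(1/(1-a^2)) * (1 - a * arccos a / √(1-a^2))) * X (Fin.last n) ^ 2
      - (arccos a / √(1 - a^2)) * a) := by
  set ν := sphNormal n θ ξ with hνdef
  set b := X (Fin.last n) with hb
  have hcθ : 0 < cos θ := cos_pos_of_mem_Ioo ⟨by linarith [hθ.1, pi_pos], hθ.2⟩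
  have hνl : ν (Fin.last n) = a := by
    rw [hνdef, ← ha]; simp [sphNormal, eVec]
  let γ : ℝ → Euc n := fun t => cos t • ν + sin t • X + cos θ • eVec n
  let γ' : ℝ → Euc n := fun t => (-sin t) • ν + cos t • X
  let y : ℝ → ℝ := fun t => cos t * a + sin t * b
  let y' : ℝ → ℝ := fun t => -sin t * a + cos t * b
  have hγ : ∀ t, HasDerivAt γ (γ' t) t := fun t =>
    (((hasDerivAt_cos t).smul_const ν).add ((hasDerivAt_sin t).smul_const X)).add_const _
  have hγ' : HasDerivAt γ' (-ν) 0 := by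
    have := ((hasDerivAt_sin 0).neg.smul_const ν).add ((hasDerivAt_cos 0).smul_const X)
    refine this.congr_deriv ?_
    simp
  have hy : ∀ t, HasDerivAt y (y' t) t := fun t =>
    (((hasDerivAt_cos t).mul_const a).add ((hasDerivAt_sin t).mul_const b))
  have hy' : HasDerivAt y' (-a) 0 := by
    have := ((hasDerivAt_sin 0).neg.mul_const a).add ((hasDerivAt_cos 0).mul_const b)
    refine this.congr_deriv ?_
    simp
  have hγ0 : γ 0 = ξ := by simp [γ, hνdef, sphNormal]
  have hγ'0 : γ' 0 = X := by simp [γ']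
  have hy0 : y 0 = a := by simp [y]
  have hy'0 : y' 0 = b := by simp [y']
  have hγl : ∀ t, γ t (Fin.last n) + cos θ = y t := by
    intro t
    simp [γ, y, eVec, hνl, hb]
  have hγs : ∀ t, ‖sphNormal n θ (γ t)‖ = 1 := by
    intro t
    have h1 : sphNormal n θ (γ t) = cos t • ν + sin t • X := by simp [sphNormal, γ]
    have h2 : ‖cos t • ν + sin t • X‖ ^ 2 = 1 := by
      rw [norm_add_sq_real, norm_smul, norm_smul, inner_smul_left, inner_smul_right, real_inner_comm, hT,
        hν, hX]
      simp
    rw [h1]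
    nlinarith [norm_nonneg (cos t • ν + sin t • X)]
  have hgrad : ContDiff ℝ 1 (gradient D) :=
    (InnerProductSpace.toDual ℝ (Euc n)).symm.contDiff.comp (hD.fderiv_right (m := 1) (by norm_num))
  have hDγ : ∀ t, HasDerivAt (fun t => D (γ t)) ⟪gradient D (γ t), γ' t⟫ t := by
    intro t
    have := ((hD.differentiable (by norm_num)) (γ t)).hasFDerivAt.comp_hasDerivAt t (hγ t)
    rw [inner_gradient_left]
    exact this
  have hev : ∀ᶠ t in nhds (0:ℝ), cos θ < y t ∧ y t < 1 := by
    have hc : ContinuousAt y 0 := (hy 0).continuousAt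
    have h1 : y 0 ∈ Set.Ioo (cos θ) 1 := by rw [hy0]; exact ⟨by linarith, ha1⟩
    exact hc.eventually (isOpen_Ioo.mem_nhds h1)
  have hev2 : (fun t => ⟪gradient D (γ t), γ' t⟫) =ᶠ[nhds 0]
      fun t => -(1/θ) * (arccos (y t) / √(1 - (y t)^2)) * y' t := by
    filter_upwards [hev.eventually_nhds] with t ht
    have hh : HasDerivAt (fun t => arccos (y t) ^ 2 / (2*θ))
        (-(1/θ) * (arccos (y t) / √(1 - (y t)^2)) * y' t) t := by
      have := ht.self_of_nhds
      exact (hasDerivAt_g (θ := θ) (by linarith) this.2).comp t (hy t)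
    refine (hDγ t).unique (hh.congr_of_eventuallyEq ?_)
    filter_upwards [ht] with u hu
    have hm : γ u ∈ cap n θ := ⟨by linarith [hγl u], hγs u⟩
    rw [hEq hm, dCap, distToTop, hγl]
  constructor
  · have := hev2.self_of_nhds
    simpa only [hγ0, hγ'0, hy0, hy'0] using this
  · have e1 : HasDerivAt (fun t => ⟪gradient D (γ t), γ' t⟫)
        (⟪gradient D ξ, -ν⟫ + ⟪fderiv ℝ (gradient D) ξ X, X⟫) 0 := by
      have h1 : HasDerivAt (fun t => gradient D (γ t)) (fderiv ℝ (gradient D) ξ X) 0 := by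
        have := ((hgrad.differentiable (by norm_num)) (γ 0)).hasFDerivAt.comp_hasDerivAt 0 (hγ 0)
        rw [hγ0, hγ'0] at this
        exact this
      have := h1.inner ℝ hγ'
      simpa only [hγ0, hγ'0] using this
    have e2 : HasDerivAt (fun t => -(1/θ) * (arccos (y t) / √(1 - (y t)^2)) * y' t)
        (-(1/θ) * (-(1/(1-a^2)) * (1 - a * arccos a / √(1-a^2)) * b) * b
          + -(1/θ) * (arccos a / √(1 - a^2)) * (-a)) 0 := by
      have h1 := (hasDerivAt_G (y := y 0) (by rw [hy0]; linarith) (by rw [hy0]; exact ha1)).comp 0 (hy 0)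
      have := (h1.const_mul (-(1/θ))).mul hy'
      simp only [hy0, hy'0, Function.comp] at this
      exact this
    have e3 := e1.unique (e2.congr_of_eventuallyEq hev2)
    have hXX : ⟪X, X⟫ = 1 := by rw [real_inner_self_eq_norm_sq, hX]; norm_num
    rw [shess, ← hνdef, hXX]
    rw [inner_neg_right] at e3
    linear_combination e3

lemma tangent_facts (n : ℕ) (θ : ℝ) (hθ : θ ∈ Set.Ioo 0 (π / 2)) (D : Euc n → ℝ) (hD : ContDiff ℝ 2 D)
    (hEq : Set.EqOn D (dCap n θ) (cap n θ)) (ξ X : Euc n) (hν : ‖sphNormal n θ ξ‖ = 1)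
    (r : ℝ) (hr : r ∈ Set.Ioo 0 θ) (ha : ξ (Fin.last n) + cos θ = cos r)
    (hT : IsTangent n θ ξ X) :
    ⟪gradient D ξ, X⟫ = -(1/θ) * (r / sin r) * X (Fin.last n) ∧
    Real.cot θ * ⟪X, X⟫ ≤ shess n θ D ξ X X := by
  by_cases hX0 : X = 0
  · subst hX0; simp [shess]
  have hnX : 0 < ‖X‖ := norm_pos_iff.2 hX0
  have hcr : cos θ < cos r :=
    cos_lt_cos_of_nonneg_of_le_pi hr.1.le (by linarith [hθ.2, pi_pos]) hr.2
  have hsr : 0 < sin r := sin_pos_of_pos_of_lt_pi hr.1 (by linarith [hr.2, hθ.2, pi_pos])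
  have hsθ : 0 < sin θ := sin_pos_of_pos_of_lt_pi hθ.1 (by linarith [hθ.2, pi_pos])
  have hcr0 : 0 < cos r := cos_pos_of_mem_Ioo ⟨by linarith [hr.1, pi_pos], by linarith [hr.2, hθ.2]⟩
  have hc1 : cos r < 1 := by nlinarith [sin_sq_add_cos_sq r]
  have hac : arccos (cos r) = r := arccos_cos hr.1.le (by linarith [hr.2, hθ.2, pi_pos])
  have hsq : √(1 - cos r ^ 2) = sin r := by rw [← sin_sq, Real.sqrt_sq hsr.le]
  obtain ⟨c, Y, hXY, hY1, hYT⟩ : ∃ (c : ℝ) (Y : Euc n), X = c • Y ∧ ‖Y‖ = 1 ∧ IsTangent n θ ξ Y := by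
    refine ⟨‖X‖, ‖X‖⁻¹ • X, ?_, ?_, ?_⟩
    · rw [smul_smul, mul_inv_cancel₀ hnX.ne', one_smul]
    · rw [norm_smul, norm_inv, norm_norm, inv_mul_cancel₀ hnX.ne']
    · unfold IsTangent at *
      rw [inner_smul_left, hT, mul_zero]
  obtain ⟨h1, h2⟩ := curve_facts n θ hθ D hD hEq ξ Y hν (by linarith) (cos r) ha hc1 hY1 hYT
  rw [hac, hsq] at h1 h2
  subst hXY
  constructor
  · rw [inner_smul_right, h1]
    simp only [PiLp.smul_apply, smul_eq_mul]; ring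
  · have e : shess n θ D ξ (c • Y) (c • Y) = c^2 * shess n θ D ξ Y Y := by
      simp only [shess, map_smul, inner_smul_left, inner_smul_right]
      simp; ring
    have hYY : ⟪Y, Y⟫ = 1 := by rw [real_inner_self_eq_norm_sq, hY1]; norm_num
    rw [e, inner_smul_left, inner_smul_right, hYY]
    have key : Real.cot θ ≤ shess n θ D ξ Y Y := by
      rw [h2]
      have hθ0 := hθ.1
      have hm := trig_mono hr.1 hr.2 hθ.2
      have ht : r * cos r ≤ sin r := by
        have := Real.lt_tan hr.1 (by linarith [hr.2, hθ.2])
        rw [tan_eq_sin_div_cos, lt_div_iff₀ hcr0] at this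
        exact this.le
      have p1 : 0 ≤ 1 - cos r * r / sin r := by
        rw [sub_nonneg, div_le_one hsr]; linarith
      have p2 : 0 ≤ 1 / (1 - cos r ^2) := by
        rw [← sin_sq]; positivity
      have p3 : Real.cot θ ≤ 1 / θ * (r / sin r * cos r) := by
        rw [cot_eq_cos_div_sin, div_le_iff₀ hsθ]
        have : 1 / θ * (r / sin r * cos r) * sin θ = (r * sin θ * cos r) / (θ * sin r) := by
          field_simp
        rw [this, le_div_iff₀ (by positivity)]
        linarith
      have p4 : 0 ≤ 1/θ * (1 / (1 - cos r ^2) * (1 - cos r * r / sin r) * Y (Fin.last n)^2) := by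
        positivity
      linarith
    have := mul_le_mul_of_nonneg_left key (sq_nonneg c)
    simp only [conj_trivial]
    linarith

lemma cap_param (n : ℕ) (hn : 1 ≤ n) (θ : ℝ) (hθ : θ ∈ Set.Ioo 0 (π / 2)) (ξ : Euc n) (hξ : ξ ∈ cap n θ) :
    ∃ ω : Euc n, ‖ω‖ = 1 ∧ ω (Fin.last n) = 0 ∧ ∃ r ∈ Set.Icc 0 θ,
      cos r = ξ (Fin.last n) + cos θ ∧ ξ = sin r • ω + (cos θ - cos r) • eVec n := by
  obtain ⟨h0, h1⟩ := hξ
  set E : Euc n := EuclideanSpace.single (Fin.last n) (1:ℝ) with hE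
  have hEn : ‖E‖ = 1 := by simp [hE]
  set a := ξ (Fin.last n) + cos θ with ha
  set h : Euc n := ξ - ξ (Fin.last n) • E with hh
  have hhl : h (Fin.last n) = 0 := by simp [hh, hE]
  have hhE : ⟪h, E⟫ = 0 := by rw [← last_eq_inner, hhl]
  have hdec : sphNormal n θ ξ = h + a • E := by
    simp only [sphNormal, eVec, hh, ha, ← hE]; module
  have hnorm : ‖h‖^2 + a^2 = 1 := by
    have : ‖h + a • E‖^2 = 1 := by rw [← hdec, h1]; norm_num
    rw [norm_add_sq_real, inner_smul_right, hhE, norm_smul, hEn] at this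
    simpa using this
  have hcθ : 0 < cos θ := cos_pos_of_mem_Ioo ⟨by linarith [hθ.1, pi_pos], hθ.2⟩
  have haθ : cos θ ≤ a := by linarith
  have ha1 : a ≤ 1 := by nlinarith [sq_nonneg ‖h‖]
  have hcos : cos (arccos a) = a := cos_arccos (by linarith) ha1
  have hsin : sin (arccos a) = ‖h‖ := by
    rw [sin_arccos, ← Real.sqrt_sq (norm_nonneg h)]; congr 1; linarith
  have hr : arccos a ∈ Set.Icc 0 θ := by
    refine ⟨arccos_nonneg a, ?_⟩
    rw [← arccos_cos hθ.1.le (by linarith [hθ.2, pi_pos])]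
    exact arccos_le_arccos haθ
  have hfin : ξ = h + (cos θ - a) • eVec n := by
    simp only [eVec, hh, ha, ← hE]; module
  by_cases hz : h = 0
  · refine ⟨EuclideanSpace.single 0 (1:ℝ), by simp, ?_, arccos a, hr, hcos, ?_⟩
    · have : (Fin.last n) ≠ 0 := by
        intro h; have := congrArg Fin.val h; simp at this; omega
      simp [this]
    · rw [hsin, hcos]; nth_rewrite 1 [hfin]; simp [hz]
  · have hp : 0 < ‖h‖ := norm_pos_iff.2 hz
    refine ⟨‖h‖⁻¹ • h, ?_, ?_, arccos a, hr, hcos, ?_⟩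
    · rw [norm_smul, norm_inv, norm_norm, inv_mul_cancel₀ hp.ne']
    · simp [hhl]
    · rw [hsin, hcos, smul_smul, mul_inv_cancel₀ hp.ne', one_smul]; exact hfin

/-- the meridian through `ω` -/
def merid (n : ℕ) (θ : ℝ) (ω : Euc n) (r : ℝ) : Euc n := sin r • ω + (cos θ - cos r) • eVec n

lemma merid_last (n : ℕ) (θ : ℝ) (ω : Euc n) (r : ℝ) (h0 : ω (Fin.last n) = 0) :
    merid n θ ω r (Fin.last n) + cos θ = cos r := by
  simp [merid, eVec, h0]

lemma merid_norm (n : ℕ) (θ : ℝ) (ω : Euc n) (r : ℝ) (h1 : ‖ω‖ = 1) (h0 : ω (Fin.last n) = 0) :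
    ‖sphNormal n θ (merid n θ ω r)‖ = 1 := by
  have e : sphNormal n θ (merid n θ ω r) =
      sin r • ω + cos r • EuclideanSpace.single (Fin.last n) (1:ℝ) := by
    simp only [sphNormal, merid, eVec]; module
  have : ‖sin r • ω + cos r • (EuclideanSpace.single (Fin.last n) (1:ℝ) : Euc n)‖^2 = 1 := by
    rw [norm_add_sq_real, inner_smul_left, inner_smul_right, ← last_eq_inner, h0, norm_smul, norm_smul, h1]
    simp
  rw [e]
  nlinarith [norm_nonneg (sin r • ω + cos r • (EuclideanSpace.single (Fin.last n) (1:ℝ) : Euc n))]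

lemma merid_cont (n : ℕ) (θ : ℝ) (ω : Euc n) : Continuous (merid n θ ω) := by
  unfold merid; fun_prop

lemma tproj_apply (n : ℕ) (θ : ℝ) (ξ X : Euc n) :
    tproj n θ ξ X = X - ⟪sphNormal n θ ξ, X⟫ • sphNormal n θ ξ := by
  simp [tproj]

lemma tproj_tangent (n : ℕ) (θ : ℝ) (ξ X : Euc n) (h : ‖sphNormal n θ ξ‖ = 1) :
    IsTangent n θ ξ (tproj n θ ξ X) := by
  rw [IsTangent, tproj_apply, inner_sub_left, inner_smul_left, real_inner_self_eq_norm_sq, h,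
    real_inner_comm]
  simp

lemma sgrad_interior (n : ℕ) (θ : ℝ) (hθ : θ ∈ Set.Ioo 0 (π / 2)) (D : Euc n → ℝ) (hD : ContDiff ℝ 2 D)
    (hEq : Set.EqOn D (dCap n θ) (cap n θ)) (ξ : Euc n) (hν : ‖sphNormal n θ ξ‖ = 1)
    (r : ℝ) (hr : r ∈ Set.Ioo 0 θ) (ha : ξ (Fin.last n) + cos θ = cos r) :
    sgrad n θ D ξ = ((1/θ) * (r / sin r)) • tproj n θ ξ (eVec n) := by
  have hsym : ∀ A B : Euc n, ⟪tproj n θ ξ A, B⟫ = ⟪A, tproj n θ ξ B⟫ := by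
    intro A B
    simp only [tproj_apply, inner_sub_left, inner_sub_right, inner_smul_left, inner_smul_right]
    rw [real_inner_comm A]
    simp; ring
  refine ext_inner_right ℝ fun Y => ?_
  rw [sgrad, hsym, (tangent_facts n θ hθ D hD hEq ξ _ hν r hr ha (tproj_tangent n θ ξ Y hν)).1,
    inner_smul_left, hsym, last_eq_inner, eVec, inner_neg_left, real_inner_comm]
  simp

/-- properties of `d = d_N²/(2θ)`, where `d_N` is the geodesic distance
on `C_θ` to the top point `N = (0,…,0,1-cos θ)`: `d` is smooth on `C_θ` (it agrees on
`C_θ` with an ambient smooth function), `d = θ/2` and `∇d = μ` on `∂C_θ`, and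
`∇²d ≥ min{1/θ, cot θ}·σ` on `C_θ`.  (The gradient and Hessian statements are expressed
via an arbitrary `C²` ambient representative `D` of `d`; for tangential arguments they do
not depend on the choice of representative.) -/
theorem distance_function_properties
    (n : ℕ) (hn : 1 ≤ n) (θ : ℝ) (hθ : θ ∈ Set.Ioo 0 (π / 2)) :
    (∃ D : Euc n → ℝ, ContDiff ℝ (⊤ : ℕ∞) D ∧ Set.EqOn D (dCap n θ) (cap n θ)) ∧
    (∀ ξ ∈ capBdry n θ, dCap n θ ξ = θ / 2) ∧
    (∀ D : Euc n → ℝ, ContDiff ℝ 2 D → Set.EqOn D (dCap n θ) (cap n θ) →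
      (∀ ξ ∈ capBdry n θ, sgrad n θ D ξ = conormal n θ ξ) ∧
      (∀ ξ ∈ cap n θ, ∀ X : Euc n, IsTangent n θ ξ X →
        min (1 / θ) (Real.cot θ) * ⟪X, X⟫ ≤ shess n θ D ξ X X)) := by
  have hθ0 := hθ.1
  have hcθ : 0 < cos θ := cos_pos_of_mem_Ioo ⟨by linarith [hθ.1, pi_pos], hθ.2⟩
  have hsθ : 0 < sin θ := sin_pos_of_pos_of_lt_pi hθ.1 (by linarith [hθ.2, pi_pos])
  refine ⟨?_, ?_, ?_⟩
  · obtain ⟨F, hF, hF2⟩ := arccos_sq_ext (cos θ) hcθ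
    refine ⟨fun ξ => F (ξ (Fin.last n) + cos θ) / (2*θ), ?_, ?_⟩
    · refine (hF.comp ?_).div_const _
      exact ContDiff.add (by fun_prop) contDiff_const
    · intro ξ hξ
      obtain ⟨ω, -, -, r, -, hr, -⟩ := cap_param n hn θ hθ ξ hξ
      simp only [dCap, distToTop]
      rw [hF2 _ (by linarith [hξ.1]) (by rw [← hr]; exact cos_le_one r)]
  · intro ξ hξ
    rw [dCap, distToTop, hξ.1, zero_add, arccos_cos hθ0.le (by linarith [hθ.2, pi_pos])]
    field_simp
  · intro D hD hEq
    have hgrad : ContDiff ℝ 1 (gradient D) :=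
      (InnerProductSpace.toDual ℝ (Euc n)).symm.contDiff.comp (hD.fderiv_right (m := 1) (by norm_num))
    have hgc : Continuous (gradient D) := hgrad.continuous
    have hhc : Continuous (fderiv ℝ (gradient D)) := hgrad.continuous_fderiv (by norm_num)
    have hnc : Continuous (sphNormal n θ) := by unfold sphNormal; fun_prop
    have htc : ∀ f : Euc n → Euc n, Continuous f → Continuous fun ξ => tproj n θ ξ (f ξ) := by
      intro f hf
      simp only [tproj_apply]
      fun_prop
    constructor
    · intro ξ hξ
      obtain ⟨ω, hω1, hω0, r, hr, hrc, hξe⟩ := cap_param n hn θ hθ ξ ⟨hξ.1.ge, hξ.2⟩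
      have hrθ : r = θ := by
        rw [hξ.1, zero_add] at hrc
        exact injOn_cos ⟨hr.1, by linarith [hr.2, hθ.2, pi_pos]⟩ ⟨hθ0.le, by linarith [hθ.2, pi_pos]⟩ hrc
      subst hrθ
      have hm : merid n r ω r = ξ := hξe.symm
      have c1 : Continuous fun s => sgrad n r D (merid n r ω s) :=
        (htc _ hgc).comp (merid_cont n r ω)
      have c2 : ContinuousAt (fun s => ((1/r) * (s / sin s)) • tproj n r (merid n r ω s) (eVec n)) r := by
        refine ContinuousAt.fun_smul ?_ ((htc _ continuous_const).comp (merid_cont n r ω)).continuousAt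
        exact continuousAt_const.mul (continuousAt_id.div continuous_sin.continuousAt hsθ.ne')
      have hnb : (nhdsWithin r (Set.Ioo 0 r)).NeBot := by
        rw [← mem_closure_iff_nhdsWithin_neBot, closure_Ioo hθ0.ne]; exact ⟨hθ0.le, le_rfl⟩
      have heq : sgrad n r D (merid n r ω r) = ((1/r) * (r / sin r)) • tproj n r (merid n r ω r) (eVec n) := by
        refine tendsto_nhds_unique (f := fun s => sgrad n r D (merid n r ω s))
          (l := nhdsWithin r (Set.Ioo 0 r)) c1.continuousAt.continuousWithinAt ?_
        refine Filter.Tendsto.congr' ?_ (ContinuousAt.continuousWithinAt c2)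
        filter_upwards [self_mem_nhdsWithin] with s hs
        exact (sgrad_interior n r hθ D hD hEq _ (merid_norm n r ω s hω1 hω0) s hs
          (merid_last n r ω s hω0)).symm
      rw [hm] at heq
      have hin : ⟪sphNormal n r ξ, eVec n⟫ = - cos r := by
        rw [eVec, inner_neg_right, ← last_eq_inner]
        simp [sphNormal, eVec, hξ.1]
      rw [heq, tproj_apply, hin, sphNormal, conormal, cot_eq_cos_div_sin]
      have e1 : 1 / r * (r / sin r) = 1 / sin r := by field_simp
      have e2 : sin r = (1 - cos r ^2) / sin r := by
        rw [← sin_sq]; field_simp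
      rw [e1]
      nth_rewrite 3 [e2]
      module
    · intro ξ hξ X hX
      obtain ⟨ω, hω1, hω0, r, hr, hrc, hξe⟩ := cap_param n hn θ hθ ξ hξ
      have hm : merid n θ ω r = ξ := hξe.symm
      have hPX : tproj n θ ξ X = X := by
        rw [tproj_apply, real_inner_comm, hX]; simp
      have hc0 : Continuous fun ζ => tproj n θ ζ X := htc _ continuous_const
      let Φ : Euc n → ℝ := fun ζ => shess n θ D ζ (tproj n θ ζ X) (tproj n θ ζ X)
        - Real.cot θ * ⟪tproj n θ ζ X, tproj n θ ζ X⟫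
      have hΦ : Continuous Φ := by
        refine Continuous.sub ?_ (continuous_const.mul (hc0.inner hc0))
        unfold shess
        exact ((hhc.clm_apply hc0).inner hc0).sub ((hgc.inner hnc).mul (hc0.inner hc0))
      have hcl : IsClosed {s : ℝ | 0 ≤ Φ (merid n θ ω s)} :=
        isClosed_le continuous_const (hΦ.comp (merid_cont n θ ω))
      have hsub : Set.Ioo 0 θ ⊆ {s : ℝ | 0 ≤ Φ (merid n θ ω s)} := by
        intro s hs
        have hν := merid_norm n θ ω s hω1 hω0
        have := (tangent_facts n θ hθ D hD hEq _ _ hν s hs (merid_last n θ ω s hω0)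
          (tproj_tangent n θ _ X hν)).2
        simpa only [Φ, Set.mem_ofPred_eq, sub_nonneg] using this
      have hr' : r ∈ closure (Set.Ioo 0 θ) := by rw [closure_Ioo hθ0.ne]; exact hr
      have := closure_minimal hsub hcl hr'
      simp only [Set.mem_ofPred_eq, hm, Φ, hPX, sub_nonneg] at this
      refine le_trans (mul_le_mul_of_nonneg_right (min_le_right _ _) real_inner_self_nonneg) this
end
end
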